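/- arXiv:1203.3187 — 2 statements merged into one kernel-verified Lean document; each statement's English description precedes it below -/
import Mathlib

section
/- For every integer n ≥ 5, the quadruply-refined ASM generating function with bulk parameters related by y = x+1 is given explicitly by: (x·z4·z1+z4+z1−1)(x·z1·z2−x·z1−x·z2−1)(x·z2·z3+z2+z3−1)(x·z3·z4−x·z3−x·z4−1)·Zqua_n(x,x+1;z1,z2,z3,z4) = z1z2z3z4·(x·z1·z3+1)(x·z2·z4+1)·((xz1+1)(xz2+1)(xz3+1)(xz4+1))^{n−2}·(x+1)^{(n−4)(n−5)/2} − ( (z2−1)(z3−1)·z4·z1·((xz4+1)(xz1+1))^{n−2} + (z4−1)(z1−1)·z2·z3·((xz2+1)(xz3+1))^{n−2} )·(x·z1·z2−x·z1−x·z2−1)(x·z3·z4−x·z3−x·z4−1)·(x+1)^{(n−3)(n−4)/2} − ( (z3−1)(z4−1)·z1·z2·(z3·z4)^{n−1}·((xz1+1)(xz2+1))^{n−2} + (z1−1)(z2−1)·z3·z4·(z1·z2)^{n−1}·((xz3+1)(xz4+1))^{n−2} )·(x·z4·z1+z4+z1−1)(x·z2·z3+z2+z3−1)·x^n·(x+1)^{(n−3)(n−4)/2}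 + (z1−1)(z2−1)(z3−1)(z4−1)·( (x·z1·z2−x·z1−x·z2−1)(x·z3·z4−x·z3−x·z4−1) + (x·z4·z1+z4+z1−1)(x·z2·z3+z2+z3−1)·(z1·z2·z3·z4)^{n−1}·x^{2n−1} )·(x+1)^{(n−2)(n−3)/2}, as an identity of polynomials in ℤ[x,z1,z2,z3,z4]. -/
open Finset

/-- The `n × n` integer matrix encoded by `e`, with entries in `{-1, 0, 1}`. -/
def asmMat {n : ℕ} (e : Fin n → Fin n → Fin 3) : Fin n → Fin n → ℤ :=
  fun i j => (e i j : ℤ) - 1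

/-- `A` is an alternating sign matrix: all entries lie in `{-1, 0, 1}`, every
partial row sum and every partial column sum is `0` or `1` (equivalently, the
nonzero entries of each row and of each column alternate in sign), and every
complete row sum and column sum is `1`. -/
def IsASM {n : ℕ} (A : Fin n → Fin n → ℤ) : Prop :=
  (∀ i j, A i j = -1 ∨ A i j = 0 ∨ A i j = 1) ∧
  (∀ (i j : Fin n), (∑ j' ∈ univ.filter (fun j' : Fin n => j' ≤ j), A i j') = 0 ∨
    (∑ j' ∈ univ.filter (fun j' : Fin n => j' ≤ j), A i j') = 1) ∧
  (∀ (i j : Fin n), (∑ i' ∈ univ.filter (fun i' : Fin n => i' ≤ i), A i' j) = 0 ∨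
    (∑ i' ∈ univ.filter (fun i' : Fin n => i' ≤ i), A i' j) = 1) ∧
  (∀ i : Fin n, (∑ j, A i j) = 1) ∧
  (∀ j : Fin n, (∑ i, A i j) = 1)

/-- `ν(A)`, the number of generalized inversions of `A`. -/
def nuASM {n : ℕ} (A : Fin n → Fin n → ℤ) : ℕ :=
  (∑ i : Fin n, ∑ i' : Fin n, ∑ j : Fin n, ∑ j' : Fin n,
      if i < i' ∧ j' ≤ j then A i j * A i' j' else 0).toNat

/-- `μ(A)`, the number of entries of `A` equal to `-1`. -/
def muASM {n : ℕ} (A : Fin n → Fin n → ℤ) : ℕ :=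
  (univ.filter (fun p : Fin n × Fin n => A p.1 p.2 = -1)).card

/-- `ρT(A)`, the number of `0`'s to the left of the `1` in the top row of `A`. -/
def rhoT {n : ℕ} (A : Fin n → Fin n → ℤ) : ℕ :=
  (univ.filter (fun j : Fin n =>
    A ⟨0, j.pos⟩ j = 0 ∧ ∃ j' : Fin n, j < j' ∧ A ⟨0, j.pos⟩ j' = 1)).card

/-- `ρR(A)`, the number of `0`'s below the `1` in the right-most column of `A`. -/
def rhoR {n : ℕ} (A : Fin n → Fin n → ℤ) : ℕ :=
  (univ.filter (fun i : Fin n =>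
    A i ⟨n - 1, Nat.sub_lt i.pos Nat.one_pos⟩ = 0 ∧
      ∃ i' : Fin n, i' < i ∧ A i' ⟨n - 1, Nat.sub_lt i.pos Nat.one_pos⟩ = 1)).card

/-- `ρB(A)`, the number of `0`'s to the right of the `1` in the bottom row of `A`. -/
def rhoB {n : ℕ} (A : Fin n → Fin n → ℤ) : ℕ :=
  (univ.filter (fun j : Fin n =>
    A ⟨n - 1, Nat.sub_lt j.pos Nat.one_pos⟩ j = 0 ∧
      ∃ j' : Fin n, j' < j ∧ A ⟨n - 1, Nat.sub_lt j.pos Nat.one_pos⟩ j' = 1)).card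

/-- `ρL(A)`, the number of `0`'s above the `1` in the left-most column of `A`. -/
def rhoL {n : ℕ} (A : Fin n → Fin n → ℤ) : ℕ :=
  (univ.filter (fun i : Fin n =>
    A i ⟨0, i.pos⟩ = 0 ∧ ∃ i' : Fin n, i < i' ∧ A i' ⟨0, i.pos⟩ = 1)).card

open Classical in
/-- The quadruply-refined ASM generating function
`Zqua_n(x,y;z1,z2,z3,z4) = Σ_A x^{ν(A)} y^{μ(A)} z1^{ρT(A)} z2^{ρR(A)} z3^{ρB(A)} z4^{ρL(A)}`. -/
noncomputable def Zqua (n : ℕ) {R : Type*} [CommRing R] (x y z1 z2 z3 z4 : R) : R :=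
  ∑ e : Fin n → Fin n → Fin 3,
    if IsASM (asmMat e) then
      x ^ nuASM (asmMat e) * y ^ muASM (asmMat e) * z1 ^ rhoT (asmMat e) *
        z2 ^ rhoR (asmMat e) * z3 ^ rhoB (asmMat e) * z4 ^ rhoL (asmMat e)
    else 0

/-- Adjacent-boundary doubly-refined generating function `Zadj_n(x,y;z1,z2)`. -/
noncomputable def Zadj (n : ℕ) {R : Type*} [CommRing R] (x y z1 z2 : R) : R :=
  Zqua n x y z1 1 1 z2

/-- Alternative adjacent-boundary doubly-refined generating function `Zbaradj_n(x,y;z1,z2)`. -/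
noncomputable def Zbaradj (n : ℕ) {R : Type*} [CommRing R] (x y z1 z2 : R) : R :=
  Zqua n x y z1 z2 1 1

/-- Triply-refined generating function `Ztri_n(x,y;z1,z2,z3)`. -/
noncomputable def Ztri (n : ℕ) {R : Type*} [CommRing R] (x y z1 z2 z3 : R) : R :=
  Zqua n x y z1 1 z2 z3

/-- Opposite-boundary doubly-refined generating function `Zopp_n(x,y;z1,z2)`. -/
noncomputable def Zopp (n : ℕ) {R : Type*} [CommRing R] (x y z1 z2 : R) : R :=
  Zqua n x y z1 1 z2 1

/-- Singly-refined generating function `Z_n(x,y;z)`. -/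
noncomputable def Zsing (n : ℕ) {R : Type*} [CommRing R] (x y z : R) : R :=
  Zqua n x y z 1 1 1

/-- Unrefined generating function `Z_n(x,y)`.  Note `Zun 0 x y = 1`. -/
noncomputable def Zun (n : ℕ) {R : Type*} [CommRing R] (x y : R) : R :=
  Zqua n x y 1 1 1 1


/-- The mixed second difference of `h`: the matrix entry encoded by a corner-sum array. -/
def cornerDiff (h : ℕ → ℕ → ℤ) (i j : ℕ) : ℤ :=
  h (i + 1) (j + 1) + h i j - h i (j + 1) - h (i + 1) j

/-- `h` is the corner-sum array of an alternating sign matrix of size `m`, extended by the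
corner sums of the identity matrix. -/
structure IsCornerSum (m : ℕ) (h : ℕ → ℕ → ℤ) : Prop where
  eq_min : ∀ i j : ℕ, i = 0 ∨ j = 0 ∨ m ≤ i ∨ m ≤ j → h i j = min (i : ℤ) (j : ℤ)
  row : ∀ i j, h i j ≤ h i (j + 1) ∧ h i (j + 1) ≤ h i j + 1
  col : ∀ i j, h i j ≤ h (i + 1) j ∧ h (i + 1) j ≤ h i j + 1

/-- Compatibility of corner-sum arrays of consecutive sizes, `h` being the larger one. -/
def Interlaces (h k : ℕ → ℕ → ℤ) : Prop :=
  ∀ i j, h i j ≤ k i j ∧ h (i + 1) (j + 1) ≤ k i j + 1 ∧ k i j ≤ h i (j + 1) ∧ k i j ≤ h (i + 1) j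

/-- The smallest array interlacing with `h` from below. -/
def lowerArray (h : ℕ → ℕ → ℤ) (i j : ℕ) : ℤ := max (h i j) (h (i + 1) (j + 1) - 1)

/-- The largest array interlacing with `k` from above. -/
def upperArray (k : ℕ → ℕ → ℤ) : ℕ → ℕ → ℤ
  | i + 1, j + 1 => min (k (i + 1) (j + 1)) (k i j + 1)
  | 0, _ => 0
  | _ + 1, 0 => 0

/-- The indicator function of a set of positions. -/
def indArray (T : Finset (ℕ × ℕ)) (i j : ℕ) : ℤ := if (i, j) ∈ T then 1 else 0

/-- The diagonal shift on positions. -/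
def diagShift : ℕ × ℕ ↪ ℕ × ℕ :=
  ⟨fun p => (p.1 + 1, p.2 + 1), fun p q h => by
    simp only [Prod.mk.injEq, add_left_inj] at h
    exact Prod.ext h.1 h.2⟩

theorem diagShift_apply (p : ℕ × ℕ) : diagShift p = (p.1 + 1, p.2 + 1) := rfl

/-- The positions in `[0, m)²` at which the entry encoded by `h` equals `c`. -/
def cellsEq (m : ℕ) (h : ℕ → ℕ → ℤ) (c : ℤ) : Finset (ℕ × ℕ) :=
  (range m ×ˢ range m).filter fun p => cornerDiff h p.1 p.2 = c

theorem mem_cellsEq {m : ℕ} {h : ℕ → ℕ → ℤ} {c : ℤ} {i j : ℕ} :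
    (i, j) ∈ cellsEq m h c ↔ (i < m ∧ j < m) ∧ cornerDiff h i j = c := by
  simp [cellsEq]

theorem indArray_diagShift_succ (T : Finset (ℕ × ℕ)) (i j : ℕ) :
    indArray (T.map diagShift) (i + 1) (j + 1) = indArray T i j := by
  have : (i + 1, j + 1) ∈ T.map diagShift ↔ (i, j) ∈ T := mem_map' (a := (i, j)) diagShift
  simp only [indArray, this]

theorem indArray_diagShift_zero_left (T : Finset (ℕ × ℕ)) (j : ℕ) :
    indArray (T.map diagShift) 0 j = 0 := by
  simp [indArray, diagShift_apply]

theorem indArray_diagShift_zero_right (T : Finset (ℕ × ℕ)) (i : ℕ) :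
    indArray (T.map diagShift) i 0 = 0 := by
  simp [indArray, diagShift_apply]

theorem IsCornerSum.le_left {m : ℕ} {h : ℕ → ℕ → ℤ} (H : IsCornerSum m h) (i j : ℕ) :
    h i j ≤ i := by
  induction i with
  | zero => have := H.eq_min 0 j (by simp); simp [this]
  | succ i ih => have := H.col i j; push_cast; linarith

theorem IsCornerSum.le_right {m : ℕ} {h : ℕ → ℕ → ℤ} (H : IsCornerSum m h) (i j : ℕ) :
    h i j ≤ j := by
  induction j with
  | zero => have := H.eq_min i 0 (by simp); simp [this]
  | succ j ih => have := H.row i j; push_cast; linarith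

theorem IsCornerSum.nonneg {m : ℕ} {h : ℕ → ℕ → ℤ} (H : IsCornerSum m h) (i j : ℕ) :
    0 ≤ h i j := by
  induction i with
  | zero => have := H.eq_min 0 j (by simp); simp [this]
  | succ i ih => have := H.col i j; linarith

theorem finite_isCornerSum (m : ℕ) : {h | IsCornerSum m h}.Finite := by
  refine Set.Finite.of_injOn (f := fun h (i j : Fin m) => h i j)
    (t := {g | ∀ i, g i ∈ {v : Fin m → ℤ | ∀ j, v j ∈ Set.Icc (0 : ℤ) m}}) ?_ ?_ ?_
  · intro h (H : IsCornerSum m h) i j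
    refine ⟨H.nonneg i j, (H.le_left i j).trans ?_⟩
    exact_mod_cast i.2.le
  · intro h (H : IsCornerSum m h) k (K : IsCornerSum m k) e
    funext i j
    by_cases hij : i < m ∧ j < m
    · exact congrFun (congrFun e ⟨i, hij.1⟩) ⟨j, hij.2⟩
    · rw [H.eq_min i j (by omega), K.eq_min i j (by omega)]
  · exact Set.Finite.pi' fun _ => Set.Finite.pi' fun _ => Set.finite_Icc _ _

/-- The finite set of corner-sum arrays of size `m`. -/
noncomputable def cornerSums (m : ℕ) : Finset (ℕ → ℕ → ℤ) := (finite_isCornerSum m).toFinset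

@[simp] theorem mem_cornerSums {m : ℕ} {h : ℕ → ℕ → ℤ} :
    h ∈ cornerSums m ↔ IsCornerSum m h := by
  simp [cornerSums]

theorem isCornerSum_of_interlaces_below {m : ℕ} {h k : ℕ → ℕ → ℤ} (H : IsCornerSum (m + 1) h)
    (hk : Interlaces h k) : IsCornerSum m k := by
  refine ⟨fun i j hij => ?_, fun i j => ?_, fun i j => ?_⟩
  · have a := hk i j
    rcases hij with rfl | rfl | hi | hj
    · have := H.eq_min 0 j (by simp)
      have := H.eq_min 0 (j + 1) (by simp)
      push_cast at *
      omega
    · have := H.eq_min i 0 (by simp)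
      have := H.eq_min (i + 1) 0 (by simp)
      push_cast at *
      omega
    · have := H.eq_min (i + 1) (j + 1) (by omega)
      have := H.eq_min (i + 1) j (by omega)
      have := H.le_left i (j + 1)
      push_cast at *
      omega
    · have := H.eq_min (i + 1) (j + 1) (by omega)
      have := H.eq_min i (j + 1) (by omega)
      have := H.le_right (i + 1) j
      push_cast at *
      omega
  · have := hk i j
    have := hk i (j + 1)
    omega
  · have := hk i j
    have := hk (i + 1) j
    omega

theorem isCornerSum_of_interlaces_above {m : ℕ} {h k : ℕ → ℕ → ℤ}
    (hk : Interlaces h k)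
    (hmin : ∀ i j : ℕ, i = 0 ∨ j = 0 ∨ m ≤ i ∨ m ≤ j → h i j = min (i : ℤ) (j : ℤ)) :
    IsCornerSum m h := by
  refine ⟨hmin, fun i j => ?_, fun i j => ?_⟩
  · cases i with
    | zero => rw [hmin 0 j (by simp), hmin 0 (j + 1) (by simp)]; push_cast; omega
    | succ i =>
      have := hk i j
      have := hk (i + 1) j
      omega
  · cases j with
    | zero => rw [hmin i 0 (by simp), hmin (i + 1) 0 (by simp)]; push_cast; omega
    | succ j =>
      have := hk i j
      have := hk i (j + 1)
      omega

theorem interlaces_lowerArray_add {m : ℕ} {h : ℕ → ℕ → ℤ} (H : IsCornerSum m h)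
    {T : Finset (ℕ × ℕ)} (hT : T ⊆ cellsEq m h (-1)) :
    Interlaces h (lowerArray h + indArray T) := by
  intro i j
  have h1 := H.row i j
  have h2 := H.row (i + 1) j
  have h3 := H.col i j
  have h4 := H.col i (j + 1)
  simp only [Pi.add_apply, lowerArray, indArray]
  split_ifs with hij
  · have := (mem_cellsEq.1 (hT hij)).2
    simp only [cornerDiff] at this
    omega
  · omega

theorem upperArray_eq_min {m : ℕ} {k : ℕ → ℕ → ℤ} (K : IsCornerSum m k) (i j : ℕ)
    (hij : i = 0 ∨ j = 0 ∨ m + 1 ≤ i ∨ m + 1 ≤ j) :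
    upperArray k i j = min (i : ℤ) (j : ℤ) := by
  match i, j with
  | 0, j => simp [upperArray]
  | i + 1, 0 => simp only [upperArray]; push_cast; omega
  | i + 1, j + 1 =>
    have := K.eq_min i j (by omega)
    have := K.eq_min (i + 1) (j + 1) (by omega)
    simp only [upperArray]
    push_cast at *
    omega

theorem interlaces_upperArray_sub {m : ℕ} {k : ℕ → ℕ → ℤ} (K : IsCornerSum m k)
    {T : Finset (ℕ × ℕ)} (hT : T ⊆ cellsEq m k 1) :
    Interlaces (upperArray k - indArray (T.map diagShift)) k := by
  have bound : ∀ i j, upperArray k (i + 1) (j + 1) - indArray (T.map diagShift) (i + 1) (j + 1) ≤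
      k i j + 1 ∧ upperArray k (i + 1) (j + 1) - indArray (T.map diagShift) (i + 1) (j + 1) ≤
      k (i + 1) (j + 1) ∧
      k i (j + 1) ≤ upperArray k (i + 1) (j + 1) - indArray (T.map diagShift) (i + 1) (j + 1) ∧
      k (i + 1) j ≤ upperArray k (i + 1) (j + 1) - indArray (T.map diagShift) (i + 1) (j + 1) := by
    intro i j
    have h1 := K.row i j
    have h2 := K.row (i + 1) j
    have h3 := K.col i j
    have h4 := K.col i (j + 1)
    rw [indArray_diagShift_succ]
    simp only [upperArray, indArray]
    split_ifs with hij
    · have := (mem_cellsEq.1 (hT hij)).2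
      simp only [cornerDiff] at this
      omega
    · omega
  intro i j
  simp only [Pi.sub_apply]
  refine ⟨?_, (bound i j).1, ?_, ?_⟩
  · match i, j with
    | 0, j => simpa [upperArray, indArray_diagShift_zero_left] using K.nonneg 0 j
    | i + 1, 0 => simpa [upperArray, indArray_diagShift_zero_right] using K.nonneg (i + 1) 0
    | i + 1, j + 1 => exact (bound i j).2.1
  · cases i with
    | zero => have := K.le_left 0 j; simpa [upperArray, indArray_diagShift_zero_left] using this
    | succ i => exact (bound i j).2.2.2
  · cases j with
    | zero => have := K.le_right i 0; simpa [upperArray, indArray_diagShift_zero_right] using this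
    | succ j => exact (bound i j).2.2.1

theorem upperArray_succ (k : ℕ → ℕ → ℤ) (i j : ℕ) :
    upperArray k (i + 1) (j + 1) = k (i + 1) (j + 1) + k i j - lowerArray k i j := by
  simp only [upperArray, lowerArray]
  omega

open Classical in
theorem sum_interlaces_below {M : Type*} [AddCommMonoid M] {m : ℕ} {h : ℕ → ℕ → ℤ}
    (H : IsCornerSum (m + 1) h) (f : (ℕ → ℕ → ℤ) → M) :
    ∑ k ∈ (cornerSums m).filter (Interlaces h), f k =
      ∑ T ∈ (cellsEq (m + 1) h (-1)).powerset, f (lowerArray h + indArray T) := by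
  symm
  refine sum_bij' (fun T _ => lowerArray h + indArray T)
    (fun k _ => (cellsEq (m + 1) h (-1)).filter fun p => k p.1 p.2 ≠ lowerArray h p.1 p.2)
    ?_ ?_ ?_ ?_ ?_
  · intro T hT
    have := interlaces_lowerArray_add H (mem_powerset.1 hT)
    exact mem_filter.2 ⟨mem_cornerSums.2 (isCornerSum_of_interlaces_below H this), this⟩
  · intro k _
    exact mem_powerset.2 (filter_subset _ _)
  · intro T hT
    ext ⟨i, j⟩
    by_cases hij : (i, j) ∈ T
    · simp [indArray, hij, mem_powerset.1 hT hij]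
    · simp [indArray, hij]
  · intro k hk
    obtain ⟨hk, hi⟩ := mem_filter.1 hk
    rw [mem_cornerSums] at hk
    funext i j
    have a := hi i j
    simp only [Pi.add_apply, indArray, mem_filter, mem_cellsEq, cornerDiff]
    have h1 := H.row i j
    have h2 := H.row (i + 1) j
    have h3 := H.col i j
    have h4 := H.col i (j + 1)
    by_cases hij : i < m + 1 ∧ j < m + 1
    · simp only [lowerArray]
      split_ifs with hc <;> omega
    · rw [if_neg (fun hc => hij hc.1.1)]
      have := hk.eq_min i j (by omega)
      have := H.eq_min i j (by omega)
      have := H.eq_min (i + 1) (j + 1) (by omega)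
      simp only [lowerArray]
      push_cast at *
      omega
  · intro T _
    rfl

open Classical in
theorem sum_interlaces_above {M : Type*} [AddCommMonoid M] {m : ℕ} {k : ℕ → ℕ → ℤ}
    (K : IsCornerSum m k) (f : (ℕ → ℕ → ℤ) → M) :
    ∑ h ∈ (cornerSums (m + 1)).filter (Interlaces · k), f h =
      ∑ T ∈ (cellsEq m k 1).powerset, f (upperArray k - indArray (T.map diagShift)) := by
  symm
  refine sum_bij' (fun T _ => upperArray k - indArray (T.map diagShift))
    (fun h _ => (cellsEq m k 1).filter fun p =>
      h (p.1 + 1) (p.2 + 1) ≠ upperArray k (p.1 + 1) (p.2 + 1))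
    ?_ ?_ ?_ ?_ ?_
  · intro T hT
    have hT := mem_powerset.1 hT
    have := interlaces_upperArray_sub K hT
    refine mem_filter.2 ⟨mem_cornerSums.2 (isCornerSum_of_interlaces_above this ?_), this⟩
    intro i j hij
    rw [← upperArray_eq_min K i j hij]
    match i, j with
    | 0, j => simp [indArray_diagShift_zero_left]
    | i + 1, 0 => simp [indArray_diagShift_zero_right]
    | i + 1, j + 1 =>
      rw [Pi.sub_apply, Pi.sub_apply, indArray_diagShift_succ, indArray, if_neg, sub_zero]
      intro hc
      have := (mem_cellsEq.1 (hT hc)).1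
      omega
  · intro h _
    exact mem_powerset.2 (filter_subset _ _)
  · intro T hT
    ext ⟨i, j⟩
    rw [mem_filter, Pi.sub_apply, Pi.sub_apply, indArray_diagShift_succ]
    by_cases hij : (i, j) ∈ T
    · simp [indArray, hij, mem_powerset.1 hT hij]
    · simp [indArray, hij]
  · intro h hh
    obtain ⟨hh, hi⟩ := mem_filter.1 hh
    rw [mem_cornerSums] at hh
    funext i j
    rw [Pi.sub_apply, Pi.sub_apply]
    match i, j with
    | 0, j => rw [indArray_diagShift_zero_left, hh.eq_min 0 j (by simp)]; simp [upperArray]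
    | i + 1, 0 =>
      rw [indArray_diagShift_zero_right, hh.eq_min (i + 1) 0 (by simp)]
      simp only [upperArray]
      push_cast
      omega
    | i + 1, j + 1 =>
      have a := hi i j
      have b := hi (i + 1) j
      have c := hi i (j + 1)
      have d := hi (i + 1) (j + 1)
      rw [indArray_diagShift_succ, indArray]
      by_cases hij : i < m ∧ j < m
      · simp only [mem_filter, mem_cellsEq, cornerDiff]
        simp only [upperArray]
        have h1 := K.row i j
        have h2 := K.row (i + 1) j
        have h3 := K.col i j
        have h4 := K.col i (j + 1)
        split_ifs with hc <;> omega
      · rw [hh.eq_min (i + 1) (j + 1) (by omega), upperArray_eq_min K (i + 1) (j + 1) (by omega),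
          if_neg, sub_zero]
        simp only [mem_filter, mem_cellsEq]
        tauto
  · intro T _
    rfl

/-- The monomial `∏ W i j ^ A i j` over the matrix `A` of size `m` encoded by `h`. -/
def cornerMonomial {K : Type*} [Field K] (m : ℕ) (h : ℕ → ℕ → ℤ) (W : ℕ → ℕ → K) : K :=
  ∏ i ∈ range m, ∏ j ∈ range m, W i j ^ cornerDiff h i j

/-- The total difference of two arrays over `[0, m)²`. -/
def volumeDiff (m : ℕ) (k h : ℕ → ℕ → ℤ) : ℤ :=
  ∑ i ∈ range m, ∑ j ∈ range m, (k i j - h i j)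

/-- The ratio of the two terms in the three-term recurrence at the plaquette `(i, j)`. -/
def plaquetteRatio {K : Type*} [Field K] (x : K) (W : ℕ → ℕ → K) (p : ℕ × ℕ) : K :=
  x * (W p.1 (p.2 + 1) * W (p.1 + 1) p.2) / (W p.1 p.2 * W (p.1 + 1) (p.2 + 1))

/-- The shift of a two-dimensional array along the diagonal. -/
def shiftArray {K : Type*} (W : ℕ → ℕ → K) (i j : ℕ) : K := W (i + 1) (j + 1)

section Monomials

variable {K : Type*} [Field K]

theorem cornerDiff_add (h k : ℕ → ℕ → ℤ) (i j : ℕ) :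
    cornerDiff (h + k) i j = cornerDiff h i j + cornerDiff k i j := by
  simp only [cornerDiff, Pi.add_apply]
  ring

theorem cornerDiff_neg (h : ℕ → ℕ → ℤ) (i j : ℕ) :
    cornerDiff (-h) i j = -cornerDiff h i j := by
  simp only [cornerDiff, Pi.neg_apply]
  ring

theorem cornerMonomial_add (m : ℕ) (h k : ℕ → ℕ → ℤ) {W : ℕ → ℕ → K} (hW : ∀ i j, W i j ≠ 0) :
    cornerMonomial m (h + k) W = cornerMonomial m h W * cornerMonomial m k W := by
  simp only [cornerMonomial, ← prod_mul_distrib, cornerDiff_add]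
  exact prod_congr rfl fun i _ => prod_congr rfl fun j _ => zpow_add₀ (hW i j) _ _

theorem cornerMonomial_neg (m : ℕ) (h : ℕ → ℕ → ℤ) (W : ℕ → ℕ → K) :
    cornerMonomial m (-h) W = (cornerMonomial m h W)⁻¹ := by
  simp only [cornerMonomial, ← prod_inv_distrib, cornerDiff_neg, zpow_neg]

theorem cornerMonomial_ne_zero (m : ℕ) (h : ℕ → ℕ → ℤ) {W : ℕ → ℕ → K}
    (hW : ∀ i j, W i j ≠ 0) : cornerMonomial m h W ≠ 0 :=
  prod_ne_zero_iff.2 fun i _ => prod_ne_zero_iff.2 fun j _ => zpow_ne_zero _ (hW i j)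

theorem prod_prod_zpow_ite {m a b : ℕ} (ha : a < m) (hb : b < m) (W : ℕ → ℕ → K) :
    ∏ i ∈ range m, ∏ j ∈ range m, W i j ^ (if i = a ∧ j = b then (1 : ℤ) else 0) = W a b := by
  rw [prod_eq_single_of_mem a (mem_range.2 ha), prod_eq_single_of_mem b (mem_range.2 hb)]
  · simp
  · intro j _ hj
    simp [hj]
  · intro i _ hi
    simp [hi]

theorem cornerMonomial_single {m i j : ℕ} (hi : i + 1 < m) (hj : j + 1 < m) {W : ℕ → ℕ → K}
    (hW : ∀ i j, W i j ≠ 0) :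
    cornerMonomial m (indArray {(i + 1, j + 1)}) W =
      W i j * W (i + 1) (j + 1) / (W i (j + 1) * W (i + 1) j) := by
  have key : ∀ a b, cornerDiff (indArray {(i + 1, j + 1)}) a b =
      (if a = i ∧ b = j then 1 else 0) + (if a = i + 1 ∧ b = j + 1 then 1 else 0) -
      ((if a = i + 1 ∧ b = j then 1 else 0) + (if a = i ∧ b = j + 1 then 1 else 0)) := by
    intro a b
    simp only [cornerDiff, indArray, mem_singleton, Prod.mk.injEq, add_left_inj]
    ring
  simp only [cornerMonomial, key, zpow_sub₀ (hW _ _), zpow_add₀ (hW _ _), prod_mul_distrib,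
    prod_div_distrib]
  rw [prod_prod_zpow_ite (by omega) (by omega), prod_prod_zpow_ite hi hj,
    prod_prod_zpow_ite hi (by omega), prod_prod_zpow_ite (by omega) hj, mul_comm (W (i + 1) j)]

theorem indArray_insert {T : Finset (ℕ × ℕ)} {p : ℕ × ℕ} (hp : p ∉ T) :
    indArray (insert p T) = indArray {p} + indArray T := by
  funext i j
  simp only [indArray, Pi.add_apply, mem_insert, mem_singleton]
  by_cases h : (i, j) = p
  · subst h
    simp [hp]
  · simp [h]

theorem cornerMonomial_map_diagShift {m : ℕ} {T : Finset (ℕ × ℕ)}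
    (hT : ∀ p ∈ T, p.1 + 1 < m ∧ p.2 + 1 < m) {W : ℕ → ℕ → K} (hW : ∀ i j, W i j ≠ 0)
    {x : K} (hx : x ≠ 0) :
    (cornerMonomial m (indArray (T.map diagShift)) W)⁻¹ * x ^ T.card =
      ∏ p ∈ T, plaquetteRatio x W p := by
  induction T using Finset.induction_on with
  | empty =>
    have : indArray (∅ : Finset (ℕ × ℕ)) = 0 := by funext i j; simp [indArray]
    simp [this, cornerMonomial, cornerDiff]
  | insert p T hp ih =>
    have hp' : diagShift p ∉ T.map diagShift := by simpa using hp
    obtain ⟨h1, h2⟩ := hT p (mem_insert_self _ _)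
    rw [map_insert, indArray_insert hp', cornerMonomial_add _ _ _ hW, prod_insert hp,
      card_insert_of_notMem hp, ← ih fun q hq => hT q (mem_insert_of_mem hq), diagShift_apply,
      cornerMonomial_single h1 h2 hW, plaquetteRatio, pow_succ]
    have := hW p.1 p.2
    have := hW (p.1 + 1) p.2
    have := hW p.1 (p.2 + 1)
    have := hW (p.1 + 1) (p.2 + 1)
    have := cornerMonomial_ne_zero m (indArray (T.map diagShift)) hW
    field_simp

theorem volumeDiff_indArray {m : ℕ} {T : Finset (ℕ × ℕ)} (hT : ∀ p ∈ T, p.1 < m ∧ p.2 < m) :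
    ∑ i ∈ range m, ∑ j ∈ range m, indArray T i j = T.card := by
  simp only [indArray]
  rw [← sum_product' (range m) (range m) fun i j => if (i, j) ∈ T then (1 : ℤ) else 0]
  rw [← sum_filter, sum_const, nsmul_eq_mul, mul_one]
  congr 2
  ext p
  simp only [mem_filter, mem_product, mem_range, Prod.mk.eta, and_iff_right_iff_imp]
  exact hT p

theorem prod_one_add_cellsEq {m : ℕ} {k : ℕ → ℕ → ℤ} (K' : IsCornerSum m k) {r : ℕ × ℕ → K}
    (hr : ∀ i < m, ∀ j < m, 1 + r (i, j) ≠ 0) :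
    (∏ i ∈ range m, ∏ j ∈ range m, (1 + r (i, j)) ^ cornerDiff k i j) *
      ∏ p ∈ cellsEq m k (-1), (1 + r p) = ∏ p ∈ cellsEq m k 1, (1 + r p) := by
  rw [← prod_product' (range m) (range m) fun i j => (1 + r (i, j)) ^ cornerDiff k i j]
  simp only [cellsEq]
  rw [prod_filter, prod_filter, ← prod_mul_distrib]
  refine prod_congr rfl fun p hp => ?_
  rw [mem_product, mem_range, mem_range] at hp
  have h1 := K'.row p.1 p.2
  have h2 := K'.row (p.1 + 1) p.2
  have h : cornerDiff k p.1 p.2 = 1 ∨ cornerDiff k p.1 p.2 = 0 ∨ cornerDiff k p.1 p.2 = -1 := by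
    simp only [cornerDiff]
    omega
  rcases h with h | h | h
  · simp [h]
  · simp [h]
  · have := hr p.1 hp.1 p.2 hp.2
    simp [h]
    field_simp

end Monomials

section Condensation

variable {K : Type*} [Field K]

open Classical in
/-- The weighted sum over the arrays of size `m` that interlace with `h` from below. -/
noncomputable def lowerSum (x : K) (m : ℕ) (h : ℕ → ℕ → ℤ) (V : ℕ → ℕ → K) : K :=
  ∑ k ∈ (cornerSums m).filter (Interlaces h),
    x ^ volumeDiff (m + 1) k h * (cornerMonomial m k V)⁻¹

open Classical in
/-- The weighted sum over the arrays of size `m + 1` that interlace with `k` from above. -/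
noncomputable def upperSum (x : K) (m : ℕ) (k : ℕ → ℕ → ℤ) (W : ℕ → ℕ → K) : K :=
  ∑ h ∈ (cornerSums (m + 1)).filter (Interlaces · k),
    x ^ volumeDiff (m + 1) k h * cornerMonomial (m + 1) h W

theorem volumeDiff_add (m : ℕ) (k h d : ℕ → ℕ → ℤ) :
    volumeDiff m (k + d) h = volumeDiff m k h + ∑ i ∈ range m, ∑ j ∈ range m, d i j := by
  simp only [volumeDiff, ← sum_add_distrib, Pi.add_apply]
  exact sum_congr rfl fun i _ => sum_congr rfl fun j _ => by ring

theorem volumeDiff_sub (m : ℕ) (k h d : ℕ → ℕ → ℤ) :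
    volumeDiff m k (h - d) = volumeDiff m k h + ∑ i ∈ range m, ∑ j ∈ range m, d i j := by
  simp only [volumeDiff, ← sum_add_distrib, Pi.sub_apply]
  exact sum_congr rfl fun i _ => sum_congr rfl fun j _ => by ring

theorem plaquetteRatio_shiftArray (x : K) (W : ℕ → ℕ → K) (p : ℕ × ℕ) :
    plaquetteRatio x (shiftArray W) p = plaquetteRatio x W (diagShift p) := rfl

theorem cellsEq_neg_one_interior {m i j : ℕ} {h : ℕ → ℕ → ℤ} (H : IsCornerSum m h)
    (hij : (i, j) ∈ cellsEq m h (-1)) : 0 < i ∧ 0 < j ∧ i + 1 < m ∧ j + 1 < m := by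
  obtain ⟨⟨hi, hj⟩, h1⟩ := mem_cellsEq.1 hij
  simp only [cornerDiff] at h1
  have r1 := H.row i j
  have r2 := H.row (i + 1) j
  have c1 := H.col i j
  have c2 := H.col i (j + 1)
  have e1 : i = 0 → h i j = min (i : ℤ) j ∧ h i (j + 1) = min (i : ℤ) ((j + 1 : ℕ) : ℤ) :=
    fun e => ⟨H.eq_min _ _ (by omega), H.eq_min _ _ (by omega)⟩
  have e2 : j = 0 → h i j = min (i : ℤ) j ∧ h (i + 1) j = min ((i + 1 : ℕ) : ℤ) (j : ℤ) :=
    fun e => ⟨H.eq_min _ _ (by omega), H.eq_min _ _ (by omega)⟩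
  have e3 : i + 1 = m → h (i + 1) j = min ((i + 1 : ℕ) : ℤ) j ∧
      h (i + 1) (j + 1) = min ((i + 1 : ℕ) : ℤ) ((j + 1 : ℕ) : ℤ) :=
    fun e => ⟨H.eq_min _ _ (by omega), H.eq_min _ _ (by omega)⟩
  have e4 : j + 1 = m → h i (j + 1) = min (i : ℤ) ((j + 1 : ℕ) : ℤ) ∧
      h (i + 1) (j + 1) = min ((i + 1 : ℕ) : ℤ) ((j + 1 : ℕ) : ℤ) :=
    fun e => ⟨H.eq_min _ _ (by omega), H.eq_min _ _ (by omega)⟩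
  push_cast at *
  omega

theorem lowerSum_eq {x : K} (hx : x ≠ 0) {m : ℕ} {h : ℕ → ℕ → ℤ} (H : IsCornerSum (m + 1) h)
    {W : ℕ → ℕ → K} (hW : ∀ i j, W i j ≠ 0) :
    lowerSum x m h (shiftArray W) =
      x ^ volumeDiff (m + 1) (lowerArray h) h *
        (cornerMonomial m (lowerArray h) (shiftArray W))⁻¹ *
        ∏ p ∈ cellsEq (m + 1) h (-1), (1 + plaquetteRatio x W p) := by
  have hW' : ∀ i j, shiftArray W i j ≠ 0 := fun i j => hW _ _
  rw [lowerSum, sum_interlaces_below H, prod_one_add, mul_sum]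
  refine sum_congr rfl fun T hT => ?_
  have hT := mem_powerset.1 hT
  obtain ⟨S, rfl⟩ : ∃ S : Finset (ℕ × ℕ), S.map diagShift = T := by
    refine ⟨T.preimage diagShift diagShift.injective.injOn, ?_⟩
    ext ⟨i, j⟩
    simp only [mem_map, mem_preimage]
    constructor
    · rintro ⟨a, ha, e⟩
      exact e ▸ ha
    · intro hij
      have := cellsEq_neg_one_interior H (hT hij)
      have e : diagShift (i - 1, j - 1) = (i, j) := by
        rw [diagShift_apply]
        ext <;> simp <;> omega
      exact ⟨(i - 1, j - 1), e.symm ▸ hij, e⟩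
  have hS : ∀ p ∈ S, p.1 + 1 < m ∧ p.2 + 1 < m := fun p hp => by
    have := cellsEq_neg_one_interior H (hT (mem_map_of_mem diagShift hp))
    omega
  rw [volumeDiff_add, volumeDiff_indArray, cornerMonomial_add _ _ _ hW', zpow_add₀ hx, mul_inv,
    prod_map, zpow_natCast, card_map]
  · simp only [← plaquetteRatio_shiftArray]
    rw [← cornerMonomial_map_diagShift hS hW' hx]
    ring
  · intro p hp
    have := mem_cellsEq.1 (hT hp)
    exact this.1

theorem upperSum_eq {x : K} (hx : x ≠ 0) {m : ℕ} {k : ℕ → ℕ → ℤ} (H : IsCornerSum m k)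
    {W : ℕ → ℕ → K} (hW : ∀ i j, W i j ≠ 0) :
    upperSum x m k W =
      x ^ volumeDiff (m + 1) k (upperArray k) * cornerMonomial (m + 1) (upperArray k) W *
        ∏ p ∈ cellsEq m k 1, (1 + plaquetteRatio x W p) := by
  rw [upperSum, sum_interlaces_above H, prod_one_add, mul_sum]
  refine sum_congr rfl fun T hT => ?_
  have hT := mem_powerset.1 hT
  have hS : ∀ p ∈ T, p.1 + 1 < m + 1 ∧ p.2 + 1 < m + 1 := fun p hp => by
    have := (mem_cellsEq.1 (hT hp)).1
    omega
  rw [volumeDiff_sub, volumeDiff_indArray, sub_eq_add_neg, cornerMonomial_add _ _ _ hW,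
    cornerMonomial_neg, zpow_add₀ hx, zpow_natCast, card_map,
    ← cornerMonomial_map_diagShift hS hW hx]
  · ring
  · intro p hp
    obtain ⟨q, hq, rfl⟩ := mem_map.1 hp
    exact hS q hq

theorem prod_prod_range_succ_split (M : ℕ) (W : ℕ → ℕ → K) (hW : ∀ i j, W i j ≠ 0)
    (a b c : ℕ → ℕ → ℤ) (h0 : ∀ j, c 0 j = a 0 j) (h1 : ∀ i, c i 0 = a i 0)
    (h2 : ∀ i j, c (i + 1) (j + 1) = a (i + 1) (j + 1) + b i j) :
    ∏ i ∈ range (M + 1), ∏ j ∈ range (M + 1), W i j ^ c i j =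
      (∏ i ∈ range (M + 1), ∏ j ∈ range (M + 1), W i j ^ a i j) *
        ∏ i ∈ range M, ∏ j ∈ range M, W (i + 1) (j + 1) ^ b i j := by
  rw [prod_range_succ' _ M, prod_range_succ' (fun i => ∏ j ∈ range (M + 1), W i j ^ a i j) M,
    mul_right_comm, ← prod_mul_distrib]
  congr 1
  · refine prod_congr rfl fun i _ => ?_
    rw [prod_range_succ' _ M, prod_range_succ' (fun j => W (i + 1) j ^ a (i + 1) j) M,
      mul_right_comm, ← prod_mul_distrib, h1]
    congr 1
    exact prod_congr rfl fun j _ => by rw [h2, zpow_add₀ (hW _ _)]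
  · exact prod_congr rfl fun j _ => by rw [h0]

theorem cornerMonomial_succ {m : ℕ} {h : ℕ → ℕ → ℤ} (H : IsCornerSum m h) (W : ℕ → ℕ → K) :
    cornerMonomial (m + 1) h W = cornerMonomial m h W * W m m := by
  have key : ∀ i j, m ≤ i ∨ m ≤ j → cornerDiff h i j = if i = j then 1 else 0 := by
    intro i j hij
    simp only [cornerDiff]
    rw [H.eq_min i j (by omega), H.eq_min (i + 1) j (by omega), H.eq_min i (j + 1) (by omega),
      H.eq_min (i + 1) (j + 1) (by omega)]
    push_cast
    split_ifs <;> omega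
  have last : ∏ j ∈ range (m + 1), W m j ^ cornerDiff h m j = W m m := by
    rw [prod_range_succ, prod_eq_one, one_mul, key _ _ (by simp)]
    · simp
    · intro j hj
      rw [key _ _ (by simp), if_neg (mem_range.1 hj).ne', zpow_zero]
  rw [cornerMonomial, prod_range_succ, last, cornerMonomial]
  congr 1
  refine prod_congr rfl fun i hi => ?_
  rw [prod_range_succ, key _ _ (by simp), if_neg (mem_range.1 hi).ne, zpow_zero, mul_one]

theorem isCornerSum_lowerArray {m : ℕ} {h : ℕ → ℕ → ℤ} (H : IsCornerSum (m + 1) h) :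
    IsCornerSum m (lowerArray h) := by
  have := interlaces_lowerArray_add H (empty_subset _)
  have e : indArray (∅ : Finset (ℕ × ℕ)) = 0 := by funext i j; simp [indArray]
  rw [e, add_zero] at this
  exact isCornerSum_of_interlaces_below H this

theorem cornerMonomial_upperArray {m : ℕ} {k : ℕ → ℕ → ℤ} (H : IsCornerSum (m + 1) k)
    {W : ℕ → ℕ → K} (hW : ∀ i j, W i j ≠ 0) :
    cornerMonomial (m + 2) (upperArray k) W =
      (∏ i ∈ range (m + 1), ∏ j ∈ range (m + 1), (W i j * W (i + 1) (j + 1)) ^ cornerDiff k i j) *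
        (cornerMonomial m (lowerArray k) (shiftArray W))⁻¹ := by
  have z1 : ∀ i, upperArray k i 0 = k i 0 := fun i => by
    rw [H.eq_min i 0 (by simp), upperArray_eq_min H i 0 (by simp)]
  have z2 : ∀ j, upperArray k 0 j = k 0 j := fun j => by
    rw [H.eq_min 0 j (by simp), upperArray_eq_min H 0 j (by simp)]
  have z3 : ∀ i, upperArray k i 1 = k i 1 := fun i => by
    cases i with
    | zero => exact z2 1
    | succ i =>
      have := H.eq_min i 0 (by simp)
      have := H.le_right (i + 1) 1
      simp only [upperArray]
      push_cast at *
      omega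
  have z4 : ∀ j, upperArray k 1 j = k 1 j := fun j => by
    cases j with
    | zero => exact z1 1
    | succ j =>
      have := H.eq_min 0 j (by simp)
      have := H.le_left 1 (j + 1)
      simp only [upperArray]
      push_cast at *
      omega
  rw [cornerMonomial, prod_prod_range_succ_split (m + 1) W hW (cornerDiff k)
    (fun i j => cornerDiff k i j - cornerDiff (lowerArray k) i j)]
  · have h1 := cornerMonomial_succ H W
    have h2 := cornerMonomial_succ (isCornerSum_lowerArray H) (shiftArray W)
    simp only [cornerMonomial, shiftArray] at h1 h2 ⊢
    rw [h1]
    simp only [zpow_sub₀ (hW _ _), mul_zpow, prod_div_distrib, prod_mul_distrib]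
    rw [h2]
    have := hW (m + 1) (m + 1)
    field_simp
  · intro j
    simp only [cornerDiff, zero_add, z4, z2]
  · intro i
    simp only [cornerDiff, zero_add, z3, z1]
  · intro i j
    simp only [cornerDiff, upperArray_succ]
    ring

theorem volumeDiff_upperArray {m : ℕ} {k : ℕ → ℕ → ℤ} (H : IsCornerSum (m + 1) k) :
    volumeDiff (m + 2) k (upperArray k) = volumeDiff (m + 1) (lowerArray k) k := by
  have z1 : ∀ i, upperArray k i 0 = k i 0 := fun i => by
    rw [H.eq_min i 0 (by simp), upperArray_eq_min H i 0 (by simp)]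
  have z2 : ∀ j, upperArray k 0 j = k 0 j := fun j => by
    rw [H.eq_min 0 j (by simp), upperArray_eq_min H 0 j (by simp)]
  rw [volumeDiff, sum_range_succ', sum_eq_zero (s := range (m + 1 + 1)), add_zero, volumeDiff]
  · refine sum_congr rfl fun i _ => ?_
    rw [sum_range_succ', z1, sub_self, add_zero]
    refine sum_congr rfl fun j _ => ?_
    rw [upperArray_succ]
    ring
  · intro j _
    rw [z2, sub_self]

theorem cornerMonomial_mul_lowerSum {x : K} (hx : x ≠ 0) {m : ℕ} {k : ℕ → ℕ → ℤ}
    (H : IsCornerSum (m + 1) k) {X W V : ℕ → ℕ → K} (hX : ∀ i j, X i j ≠ 0)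
    (hW : ∀ i j, W i j ≠ 0) (hV : ∀ i j, V i j ≠ 0)
    (hrec : ∀ i < m + 1, ∀ j < m + 1, X i j * V i j =
      W i j * W (i + 1) (j + 1) + x * (W i (j + 1) * W (i + 1) j)) :
    cornerMonomial (m + 1) k X * lowerSum x m k (shiftArray W) =
      (cornerMonomial (m + 1) k V)⁻¹ * upperSum x (m + 1) k W := by
  have hfac : ∀ i < m + 1, ∀ j < m + 1,
      X i j = (V i j)⁻¹ * (W i j * W (i + 1) (j + 1)) * (1 + plaquetteRatio x W (i, j)) := by
    intro i hi j hj
    have := hV i j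
    have := hW i j
    have := hW (i + 1) (j + 1)
    rw [eq_comm, ← mul_right_inj' (hV i j), mul_comm (V i j) (X i j), hrec i hi j hj]
    simp only [plaquetteRatio]
    field_simp
  have hne : ∀ i < m + 1, ∀ j < m + 1, 1 + plaquetteRatio x W (i, j) ≠ 0 :=
    fun i hi j hj h0 => hX i j (by rw [hfac i hi j hj, h0, mul_zero])
  have hmono : cornerMonomial (m + 1) k X = (cornerMonomial (m + 1) k V)⁻¹ *
      (∏ i ∈ range (m + 1), ∏ j ∈ range (m + 1), (W i j * W (i + 1) (j + 1)) ^ cornerDiff k i j) *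
      ∏ i ∈ range (m + 1), ∏ j ∈ range (m + 1),
        (1 + plaquetteRatio x W (i, j)) ^ cornerDiff k i j := by
    simp only [cornerMonomial, ← prod_inv_distrib, ← prod_mul_distrib]
    refine prod_congr rfl fun i hi => prod_congr rfl fun j hj => ?_
    rw [hfac i (mem_range.1 hi) j (mem_range.1 hj), mul_zpow, mul_zpow, inv_zpow]
  rw [hmono, lowerSum_eq hx H hW, upperSum_eq hx H hW, volumeDiff_upperArray H,
    cornerMonomial_upperArray H hW, ← prod_one_add_cellsEq H hne]
  ring

/-- The two-layer partition function over corner-sum arrays of size `m + 1`. -/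
noncomputable def layerSum (x : K) (m : ℕ) (X W : ℕ → ℕ → K) : K :=
  ∑ k ∈ cornerSums (m + 1), cornerMonomial (m + 1) k X * lowerSum x m k (shiftArray W)

theorem layerSum_succ {x : K} (hx : x ≠ 0) {m : ℕ} {X W V : ℕ → ℕ → K} (hX : ∀ i j, X i j ≠ 0)
    (hW : ∀ i j, W i j ≠ 0) (hV : ∀ i j, V i j ≠ 0)
    (hrec : ∀ i < m + 1, ∀ j < m + 1, X i j * V (i + 1) (j + 1) =
      W i j * W (i + 1) (j + 1) + x * (W i (j + 1) * W (i + 1) j)) :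
    layerSum x m X W = layerSum x (m + 1) W V := by
  classical
  rw [layerSum, sum_congr rfl fun k hk => cornerMonomial_mul_lowerSum (V := shiftArray V) hx
    (mem_cornerSums.1 hk) hX hW (fun i j => hV _ _) hrec]
  simp only [layerSum, upperSum, lowerSum, mul_sum]
  rw [sum_comm' (t' := cornerSums (m + 1 + 1))
    (s' := fun h => (cornerSums (m + 1)).filter (Interlaces h))]
  · exact sum_congr rfl fun h _ => sum_congr (by congr) fun k _ => by ring
  · intro k h
    simp only [mem_filter]
    tauto

theorem layerSum_zero (x : K) (X W : ℕ → ℕ → K) : layerSum x 0 X W = X 0 0 := by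
  have hmin : ∀ m ≤ 1, IsCornerSum m fun i j : ℕ => min (i : ℤ) (j : ℤ) := fun m _ =>
    ⟨fun i j _ => rfl, fun i j => by push_cast; omega, fun i j => by push_cast; omega⟩
  have huniq : ∀ m ≤ 1, cornerSums m = {fun i j : ℕ => min (i : ℤ) (j : ℤ)} := by
    intro m hm
    refine eq_singleton_iff_unique_mem.2 ⟨mem_cornerSums.2 (hmin m hm), fun h hh => ?_⟩
    funext i j
    exact (mem_cornerSums.1 hh).eq_min i j (by omega)
  classical
  rw [layerSum]
  simp only [huniq _ le_rfl, sum_singleton, zero_add]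
  rw [lowerSum, huniq 0 zero_le_one, filter_singleton, if_pos, sum_singleton]
  · simp [cornerMonomial, cornerDiff, volumeDiff]
  · intro i j
    push_cast
    omega

/-- Robbins–Rumsey condensation: an array of arrays satisfying the three-term recurrence is
computed at its apex by the two-layer partition function. -/
theorem layerSum_eq_apex {x : K} (hx : x ≠ 0) (Y : ℕ → ℕ → ℕ → K) (hY : ∀ m i j, Y m i j ≠ 0)
    (n : ℕ) (hrec : ∀ m < n, ∀ i ≤ m, ∀ j ≤ m, Y m i j * Y (m + 2) (i + 1) (j + 1) =
      Y (m + 1) i j * Y (m + 1) (i + 1) (j + 1) +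
        x * (Y (m + 1) i (j + 1) * Y (m + 1) (i + 1) j)) :
    layerSum x n (Y n) (Y (n + 1)) = Y 0 0 0 := by
  induction n with
  | zero => exact layerSum_zero x _ _
  | succ n ih =>
    rw [← ih fun m hm => hrec m (by omega)]
    refine (layerSum_succ hx (hY n) (hY _) (hY _) fun i hi j hj => ?_).symm
    exact hrec n (by omega) i (by omega) j (by omega)

end Condensation

section Encoding

/-- The extension of a square matrix by the identity matrix. -/
def extendMat {n : ℕ} (A : Fin n → Fin n → ℤ) (i j : ℕ) : ℤ :=
  if h : i < n ∧ j < n then A ⟨i, h.1⟩ ⟨j, h.2⟩ else if i = j then 1 else 0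

/-- The corner-sum array of a square matrix extended by the identity matrix. -/
def cornerArray {n : ℕ} (A : Fin n → Fin n → ℤ) (i j : ℕ) : ℤ :=
  ∑ a ∈ range i, ∑ b ∈ range j, extendMat A a b

/-- The matrix encoded by a corner-sum array, with entries stored in `Fin 3`. -/
def codeOfCorner (n : ℕ) (h : ℕ → ℕ → ℤ) (i j : Fin n) : Fin 3 :=
  Fin.ofNat 3 (cornerDiff h i j + 1).toNat

theorem extendMat_coe {n : ℕ} (A : Fin n → Fin n → ℤ) (i j : Fin n) :
    extendMat A i j = A i j := by
  simp [extendMat]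

theorem extendMat_swap {n : ℕ} (A : Fin n → Fin n → ℤ) (i j : ℕ) :
    extendMat (fun i j => A j i) i j = extendMat A j i := by
  simp only [extendMat, and_comm, eq_comm]

theorem extendMat_outside {n : ℕ} (A : Fin n → Fin n → ℤ) {i j : ℕ} (h : n ≤ i ∨ n ≤ j) :
    extendMat A i j = if i = j then 1 else 0 := by
  rw [extendMat, dif_neg (by omega)]

theorem cornerDiff_cornerArray {n : ℕ} (A : Fin n → Fin n → ℤ) (i j : ℕ) :
    cornerDiff (cornerArray A) i j = extendMat A i j := by
  simp only [cornerDiff, cornerArray, sum_range_succ, sum_add_distrib]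
  ring

theorem IsASM.swap {n : ℕ} {A : Fin n → Fin n → ℤ} (h : IsASM A) :
    IsASM fun i j => A j i :=
  ⟨fun i j => h.1 j i, fun i j => h.2.2.1 j i, fun i j => h.2.1 j i, h.2.2.2.2, h.2.2.2.1⟩

theorem sum_filter_le_eq_sum_range {n : ℕ} (f : Fin n → ℤ) (g : ℕ → ℤ)
    (hfg : ∀ j : Fin n, f j = g j) (j : Fin n) :
    ∑ j' ∈ univ.filter (fun j' : Fin n => j' ≤ j), f j' = ∑ b ∈ range (j + 1), g b := by
  rw [sum_filter]
  simp only [hfg, Fin.le_def]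
  rw [Fin.sum_univ_eq_sum_range (fun b => if b ≤ (j : ℕ) then g b else 0) n, ← sum_filter]
  refine sum_congr ?_ fun _ _ => rfl
  ext b
  have := j.2
  simp only [mem_filter, mem_range]
  omega

theorem IsASM.partial_row_sum {n : ℕ} {A : Fin n → Fin n → ℤ} (h : IsASM A) (i j : ℕ) :
    (∑ b ∈ range j, extendMat A i b = 0 ∨ ∑ b ∈ range j, extendMat A i b = 1) ∧
      (n ≤ j → ∑ b ∈ range j, extendMat A i b = if i < j then 1 else 0) := by
  by_cases hi : i < n
  · have full : ∀ j, n ≤ j → ∑ b ∈ range j, extendMat A i b = 1 := by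
      intro j hj
      induction j, hj using Nat.le_induction with
      | base =>
        rw [← h.2.2.2.1 ⟨i, hi⟩, sum_range]
        exact sum_congr rfl fun b _ => extendMat_coe A ⟨i, hi⟩ b
      | succ j hj ih =>
        rw [sum_range_succ, ih, extendMat_outside A (Or.inr hj), if_neg (by omega), add_zero]
    refine ⟨?_, fun hj => by rw [full j hj, if_pos (by omega)]⟩
    by_cases hj : n ≤ j
    · exact Or.inr (full j hj)
    · cases j with
      | zero => simp
      | succ j =>
        have := h.2.1 ⟨i, hi⟩ ⟨j, by omega⟩
        rwa [sum_filter_le_eq_sum_range _ (extendMat A i)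
          fun b => (extendMat_coe A ⟨i, hi⟩ b).symm] at this
  · have : ∑ b ∈ range j, extendMat A i b = if i < j then 1 else 0 := by
      rw [sum_congr rfl fun b _ => extendMat_outside A (j := b) (Or.inl (not_lt.1 hi))]
      simp
    refine ⟨?_, fun _ => this⟩
    rw [this]
    split_ifs <;> simp

theorem cornerArray_swap {n : ℕ} (A : Fin n → Fin n → ℤ) (i j : ℕ) :
    cornerArray (fun i j => A j i) i j = cornerArray A j i := by
  simp only [cornerArray, extendMat_swap]
  exact sum_comm

theorem IsASM.cornerArray_col {n : ℕ} {A : Fin n → Fin n → ℤ} (h : IsASM A) (i j : ℕ) :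
    cornerArray A i j ≤ cornerArray A (i + 1) j ∧
      cornerArray A (i + 1) j ≤ cornerArray A i j + 1 := by
  have := (h.partial_row_sum i j).1
  simp only [cornerArray, sum_range_succ]
  omega

theorem IsASM.cornerArray_of_le {n : ℕ} {A : Fin n → Fin n → ℤ} (h : IsASM A) (i j : ℕ)
    (hj : n ≤ j) : cornerArray A i j = min (i : ℤ) (j : ℤ) := by
  induction i with
  | zero => simp [cornerArray]
  | succ i ih =>
    have := (h.partial_row_sum i j).2 hj
    rw [cornerArray, sum_range_succ, this, ← cornerArray, ih]
    push_cast
    split_ifs <;> omega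

theorem IsASM.isCornerSum {n : ℕ} {A : Fin n → Fin n → ℤ} (h : IsASM A) :
    IsCornerSum n (cornerArray A) := by
  refine ⟨fun i j hij => ?_, fun i j => ?_, h.cornerArray_col⟩
  · rcases hij with rfl | rfl | hi | hj
    · simp [cornerArray]
    · simp [cornerArray]
    · rw [← cornerArray_swap A j i, h.swap.cornerArray_of_le j i hi, min_comm]
    · exact h.cornerArray_of_le i j hj
  · have := h.swap.cornerArray_col j i
    simpa only [cornerArray_swap] using this

theorem IsCornerSum.cornerDiff_mem {m : ℕ} {h : ℕ → ℕ → ℤ} (H : IsCornerSum m h) (i j : ℕ) :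
    cornerDiff h i j = -1 ∨ cornerDiff h i j = 0 ∨ cornerDiff h i j = 1 := by
  have := H.row i j
  have := H.row (i + 1) j
  simp only [cornerDiff]
  omega

theorem asmMat_codeOfCorner {n : ℕ} {h : ℕ → ℕ → ℤ} (H : IsCornerSum n h) (i j : Fin n) :
    asmMat (codeOfCorner n h) i j = cornerDiff h i j := by
  rcases H.cornerDiff_mem i j with e | e | e <;> simp [asmMat, codeOfCorner, e]

theorem IsCornerSum.sum_row {m : ℕ} {h : ℕ → ℕ → ℤ} (H : IsCornerSum m h) (i p : ℕ) :
    ∑ j ∈ range p, cornerDiff h i j = h (i + 1) p - h i p := by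
  induction p with
  | zero =>
    rw [sum_range_zero, H.eq_min _ _ (by simp), H.eq_min _ _ (by simp)]
    push_cast
    omega
  | succ p ih =>
    rw [sum_range_succ, ih]
    simp only [cornerDiff]
    ring

theorem IsCornerSum.sum_col {m : ℕ} {h : ℕ → ℕ → ℤ} (H : IsCornerSum m h) (p j : ℕ) :
    ∑ i ∈ range p, cornerDiff h i j = h p (j + 1) - h p j := by
  induction p with
  | zero =>
    rw [sum_range_zero, H.eq_min _ _ (by simp), H.eq_min _ _ (by simp)]
    push_cast
    omega
  | succ p ih =>
    rw [sum_range_succ, ih]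
    simp only [cornerDiff]
    ring

theorem isASM_codeOfCorner {n : ℕ} {h : ℕ → ℕ → ℤ} (H : IsCornerSum n h) :
    IsASM (asmMat (codeOfCorner n h)) := by
  have e := asmMat_codeOfCorner H
  refine ⟨fun i j => ?_, fun i j => ?_, fun i j => ?_, fun i => ?_, fun j => ?_⟩
  · rw [e]
    exact H.cornerDiff_mem i j
  · rw [sum_filter_le_eq_sum_range _ (cornerDiff h i) (e i), H.sum_row]
    have := H.col i (j + 1)
    omega
  · rw [sum_filter_le_eq_sum_range _ (fun i => cornerDiff h i j) (fun i => e i j), H.sum_col]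
    have := H.row (i + 1) j
    omega
  · have := H.sum_row i n
    rw [sum_range] at this
    simp only [e]
    rw [this, H.eq_min _ _ (by simp), H.eq_min _ _ (by simp)]
    push_cast
    omega
  · have := H.sum_col n j
    rw [sum_range] at this
    simp only [e]
    rw [this, H.eq_min _ _ (by simp), H.eq_min _ _ (by simp)]
    push_cast
    omega

theorem extendMat_codeOfCorner {n : ℕ} {h : ℕ → ℕ → ℤ} (H : IsCornerSum n h) (i j : ℕ) :
    extendMat (asmMat (codeOfCorner n h)) i j = cornerDiff h i j := by
  by_cases hij : i < n ∧ j < n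
  · exact (extendMat_coe _ ⟨i, hij.1⟩ ⟨j, hij.2⟩).trans (asmMat_codeOfCorner H _ _)
  · rw [extendMat_outside _ (by omega)]
    simp only [cornerDiff]
    rw [H.eq_min i j (by omega), H.eq_min (i + 1) j (by omega), H.eq_min i (j + 1) (by omega),
      H.eq_min (i + 1) (j + 1) (by omega)]
    push_cast
    split_ifs <;> omega

theorem cornerArray_codeOfCorner {n : ℕ} {h : ℕ → ℕ → ℤ} (H : IsCornerSum n h) :
    cornerArray (asmMat (codeOfCorner n h)) = h := by
  funext i j
  simp only [cornerArray, extendMat_codeOfCorner H, H.sum_row]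
  rw [sum_range_sub (fun i => h i j), H.eq_min 0 j (by simp)]
  simp

theorem codeOfCorner_cornerArray {n : ℕ} (e : Fin n → Fin n → Fin 3) :
    codeOfCorner n (cornerArray (asmMat e)) = e := by
  funext i j
  simp [codeOfCorner, cornerDiff_cornerArray, extendMat_coe, asmMat]

open Classical in
/-- Summation over alternating sign matrices is summation over corner-sum arrays. -/
theorem sum_isASM_eq_sum_cornerSums {M : Type*} [AddCommMonoid M] {n : ℕ}
    (f : (Fin n → Fin n → ℤ) → M) (g : (ℕ → ℕ → ℤ) → M)
    (hfg : ∀ A : Fin n → Fin n → ℤ, IsASM A → f A = g (cornerArray A)) :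
    (∑ e : Fin n → Fin n → Fin 3, if IsASM (asmMat e) then f (asmMat e) else 0) =
      ∑ h ∈ cornerSums n, g h := by
  rw [← sum_filter]
  refine sum_bij' (fun e _ => cornerArray (asmMat e)) (fun h _ => codeOfCorner n h)
    ?_ ?_ ?_ ?_ ?_
  · intro e he
    exact mem_cornerSums.2 (mem_filter.1 he).2.isCornerSum
  · intro h hh
    exact mem_filter.2 ⟨mem_univ _, isASM_codeOfCorner (mem_cornerSums.1 hh)⟩
  · intro e _
    exact codeOfCorner_cornerArray e
  · intro h hh
    exact cornerArray_codeOfCorner (mem_cornerSums.1 hh)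
  · intro e he
    exact hfg _ (mem_filter.1 he).2

end Encoding

section Weights

theorem sum_range_sub_of_le (u : ℕ → ℤ) {q n : ℕ} (hq : q ≤ n) :
    (∑ j ∈ range n, if q ≤ j then u (j + 1) - u j else 0) = u n - u q := by
  induction n, hq using Nat.le_induction with
  | base =>
    rw [sub_self]
    exact sum_eq_zero fun j hj => if_neg (by have := mem_range.1 hj; omega)
  | succ n hn ih =>
    rw [sum_range_succ, ih, if_pos hn]
    ring

theorem sum_range_sub_of_lt (u : ℕ → ℤ) {q n : ℕ} (hq : q ≤ n) :
    (∑ j ∈ range n, if j < q then u (j + 1) - u j else 0) = u q - u 0 := by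
  rw [← sum_range_sub, ← sum_filter]
  refine sum_congr ?_ fun _ _ => rfl
  ext j
  simp only [mem_filter, mem_range]
  omega

theorem IsCornerSum.sum_north_east {n : ℕ} {h : ℕ → ℕ → ℤ} (H : IsCornerSum n h) {p q : ℕ}
    (hp : p ≤ n) (hq : q ≤ n) :
    (∑ i ∈ range n, ∑ j ∈ range n, if i < p ∧ q ≤ j then cornerDiff h i j else 0) =
      p - h p q := by
  have inner : ∀ i, (∑ j ∈ range n, if i < p ∧ q ≤ j then cornerDiff h i j else 0) =
      if i < p then (h (i + 1) n - h (i + 1) q) - (h i n - h i q) else 0 := by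
    intro i
    split_ifs with hi
    · have := sum_range_sub_of_le (fun j => h (i + 1) j - h i j) hq
      simp only [hi, true_and]
      calc _ = ∑ j ∈ range n, if q ≤ j then
            (h (i + 1) (j + 1) - h i (j + 1)) - (h (i + 1) j - h i j) else 0 :=
            sum_congr rfl fun j _ => by simp only [cornerDiff]; split_ifs <;> ring
        _ = _ := by rw [this]; ring
    · simp [hi]
  rw [sum_congr rfl fun i _ => inner i, sum_range_sub_of_lt (fun i => h i n - h i q) hp,
    H.eq_min p n (by simp), H.eq_min 0 n (by simp), H.eq_min 0 q (by simp)]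
  push_cast
  omega

theorem IsCornerSum.sum_inversions_row {n : ℕ} {h : ℕ → ℕ → ℤ} (H : IsCornerSum n h) {i : ℕ}
    (hi : i < n) :
    ∑ j ∈ range n, (i - h i j) * cornerDiff h i j = ∑ j ∈ range n, (lowerArray h i j - h i j) := by
  rw [← sub_eq_zero, ← sum_sub_distrib]
  have step : ∀ j, (i - h i j) * cornerDiff h i j - (lowerArray h i j - h i j) =
      (h (i + 1) (j + 1) - h i (j + 1)) * (i - h i (j + 1)) -
        (h (i + 1) j - h i j) * (i - h i j) := by
    intro j
    have lower : lowerArray h i j - h i j =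
        (h (i + 1) (j + 1) - h i (j + 1)) * (h i (j + 1) - h i j) := by
      have := H.col i (j + 1)
      have := H.row i j
      obtain hr | hr : h i (j + 1) = h i j ∨ h i (j + 1) = h i j + 1 := by omega
      all_goals
        obtain hc | hc : h (i + 1) (j + 1) = h i (j + 1) ∨
          h (i + 1) (j + 1) = h i (j + 1) + 1 := by omega
      all_goals simp [lowerArray, hr, hc]
    rw [lower, cornerDiff]
    ring
  rw [sum_congr rfl fun j _ => step j,
    sum_range_sub (fun j => (h (i + 1) j - h i j) * (i - h i j)),
    H.eq_min i n (by simp), H.eq_min i 0 (by simp), H.eq_min (i + 1) 0 (by simp),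
    min_eq_left (by exact_mod_cast hi.le)]
  simp only [Nat.cast_zero, Nat.cast_nonneg, min_eq_right, sub_self, mul_zero, zero_mul]

/-- The number of generalized inversions in terms of corner sums. -/
theorem IsCornerSum.sum_inversions {n : ℕ} {h : ℕ → ℕ → ℤ} (H : IsCornerSum n h) :
    (∑ i ∈ range n, ∑ i' ∈ range n, ∑ j ∈ range n, ∑ j' ∈ range n,
      if i < i' ∧ j' ≤ j then cornerDiff h i j * cornerDiff h i' j' else 0) =
      volumeDiff n (lowerArray h) h := by
  rw [sum_comm, volumeDiff]
  refine sum_congr rfl fun i' hi' => ?_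
  rw [← H.sum_inversions_row (mem_range.1 hi'), sum_congr rfl fun i _ => sum_comm, sum_comm]
  refine sum_congr rfl fun j' hj' => ?_
  rw [← H.sum_north_east (mem_range.1 hi').le (mem_range.1 hj').le]
  simp only [sum_mul, ite_mul, zero_mul]

theorem nuASM_eq {n : ℕ} {A : Fin n → Fin n → ℤ} (hA : IsASM A) :
    (nuASM A : ℤ) = volumeDiff n (lowerArray (cornerArray A)) (cornerArray A) := by
  rw [nuASM, Int.toNat_of_nonneg]
  all_goals
    have key := hA.isCornerSum.sum_inversions
    simp only [sum_range, cornerDiff_cornerArray, extendMat_coe, Fin.val_fin_lt,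
      Fin.val_fin_le] at key
  · exact key
  · rw [key]
    exact sum_nonneg fun i _ => sum_nonneg fun j _ => sub_nonneg.2 (le_max_left _ _)

theorem muASM_eq {n : ℕ} (A : Fin n → Fin n → ℤ) :
    muASM A = (cellsEq n (cornerArray A) (-1)).card := by
  rw [muASM, cellsEq, card_filter, card_filter, sum_product, Fintype.sum_prod_type]
  simp only [sum_range, cornerDiff_cornerArray, extendMat_coe]

theorem exists_eq_ite_of_sum_eq_one {n : ℕ} {v : Fin n → ℤ} (h01 : ∀ j, v j = 0 ∨ v j = 1)
    (hsum : ∑ j, v j = 1) : ∃ j₀, ∀ j, v j = if j = j₀ then 1 else 0 := by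
  obtain ⟨j₀, -, hj₀⟩ := exists_ne_zero_of_sum_ne_zero (hsum.trans_ne one_ne_zero)
  refine ⟨j₀, fun j => ?_⟩
  split_ifs with h
  · exact h ▸ (h01 j₀).resolve_left hj₀
  · by_contra hj
    have hle : v j₀ + v j ≤ ∑ j, v j := by
      rw [← sum_pair (Ne.symm h)]
      exact sum_le_sum_of_subset_of_nonneg (subset_univ _) fun k _ _ => by
        rcases h01 k with e | e <;> simp [e]
    have := h01 j
    have := h01 j₀
    omega

variable {K : Type*} [Field K]

theorem prod_zpow_ite {n : ℕ} (f : Fin n → K) (j₀ : Fin n) :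
    ∏ j, f j ^ (if j = j₀ then (1 : ℤ) else 0) = f j₀ := by
  rw [prod_eq_single j₀ (fun j _ hj => by simp [hj]) (by simp)]
  simp

theorem pow_card_zeros_before {n : ℕ} {v : Fin n → ℤ} (h01 : ∀ j, v j = 0 ∨ v j = 1)
    (hsum : ∑ j, v j = 1) (z : K) :
    z ^ (univ.filter fun j => v j = 0 ∧ ∃ j', j < j' ∧ v j' = 1).card =
      ∏ j : Fin n, (z ^ (j : ℕ)) ^ v j := by
  obtain ⟨j₀, hj₀⟩ := exists_eq_ite_of_sum_eq_one h01 hsum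
  have : (univ.filter fun j => v j = 0 ∧ ∃ j', j < j' ∧ v j' = 1) = Iio j₀ := by
    ext j
    simp only [hj₀, mem_filter, mem_univ, true_and, mem_Iio]
    constructor
    · rintro ⟨-, j', hj', h⟩
      by_contra hc
      rw [if_neg (by rintro rfl; exact hc hj')] at h
      exact zero_ne_one h
    · intro h
      exact ⟨if_neg h.ne, j₀, h, if_pos rfl⟩
  rw [this, Fin.card_Iio]
  simp only [hj₀]
  exact (prod_zpow_ite (fun j : Fin n => z ^ (j : ℕ)) j₀).symm

theorem pow_card_zeros_after {n : ℕ} {v : Fin n → ℤ} (h01 : ∀ j, v j = 0 ∨ v j = 1)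
    (hsum : ∑ j, v j = 1) (z : K) :
    z ^ (univ.filter fun j => v j = 0 ∧ ∃ j', j' < j ∧ v j' = 1).card =
      ∏ j : Fin n, (z ^ (n - 1 - (j : ℕ))) ^ v j := by
  obtain ⟨j₀, hj₀⟩ := exists_eq_ite_of_sum_eq_one h01 hsum
  have : (univ.filter fun j => v j = 0 ∧ ∃ j', j' < j ∧ v j' = 1) = Ioi j₀ := by
    ext j
    simp only [hj₀, mem_filter, mem_univ, true_and, mem_Ioi]
    constructor
    · rintro ⟨-, j', hj', h⟩
      by_contra hc
      rw [if_neg (by rintro rfl; exact hc hj')] at h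
      exact zero_ne_one h
    · intro h
      exact ⟨if_neg h.ne', j₀, h, if_pos rfl⟩
  rw [this, Fin.card_Ioi]
  simp only [hj₀]
  exact (prod_zpow_ite (fun j : Fin n => z ^ (n - 1 - (j : ℕ))) j₀).symm

/-- The array of boundary weights of the quadruply-refined generating function. -/
def boundaryWeight (N : ℕ) (z1 z2 z3 z4 : K) (i j : ℕ) : K :=
  (if i = 0 then z1 ^ j else 1) * (if j = N then z2 ^ (N - i) else 1) *
    (if i = N then z3 ^ (N - j) else 1) * (if j = 0 then z4 ^ i else 1)

theorem prod_prod_ite_zpow {n c : ℕ} (hc : c < n) (f : ℕ → K) (a : ℕ → ℕ → ℤ) :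
    ∏ i ∈ range n, ∏ j ∈ range n, (if i = c then f j else 1) ^ a i j =
      ∏ j ∈ range n, f j ^ a c j := by
  rw [prod_eq_single_of_mem c (mem_range.2 hc) fun i _ hi => by simp [hi]]
  simp

theorem cornerMonomial_boundaryWeight {N : ℕ} {A : Fin (N + 1) → Fin (N + 1) → ℤ} (hA : IsASM A)
    (z1 z2 z3 z4 : K) :
    cornerMonomial (N + 1) (cornerArray A) (boundaryWeight N z1 z2 z3 z4) =
      z1 ^ rhoT A * z2 ^ rhoR A * z3 ^ rhoB A * z4 ^ rhoL A := by
  have H := hA.isCornerSum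
  have entry : ∀ i j : Fin (N + 1), A i j = cornerDiff (cornerArray A) i j := fun i j => by
    rw [cornerDiff_cornerArray, extendMat_coe]
  have top : ∀ j, A 0 j = 0 ∨ A 0 j = 1 := fun j => by
    rw [entry, cornerDiff]
    have := H.row 1 j
    have := H.eq_min 0 j (by simp)
    have := H.eq_min 0 (j + 1) (by simp)
    simp only [Fin.val_zero]
    push_cast at *
    omega
  have left : ∀ i, A i 0 = 0 ∨ A i 0 = 1 := fun i => by
    rw [entry, cornerDiff]
    have := H.col i 1
    have := H.eq_min i 0 (by simp)
    have := H.eq_min (i + 1) 0 (by simp)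
    simp only [Fin.val_zero]
    push_cast at *
    omega
  have bottom : ∀ j, A (Fin.last N) j = 0 ∨ A (Fin.last N) j = 1 := fun j => by
    rw [entry, cornerDiff]
    have := H.row N j
    have := H.eq_min (N + 1) j (by simp)
    have := H.eq_min (N + 1) (j + 1) (by simp)
    simp only [Fin.val_last]
    push_cast at *
    omega
  have right : ∀ i, A i (Fin.last N) = 0 ∨ A i (Fin.last N) = 1 := fun i => by
    rw [entry, cornerDiff]
    have := H.col i N
    have := H.eq_min i (N + 1) (by simp)
    have := H.eq_min (i + 1) (N + 1) (by simp)
    simp only [Fin.val_last]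
    push_cast at *
    omega
  have eT : z1 ^ rhoT A = _ := pow_card_zeros_before top (hA.2.2.2.1 _) z1
  have eL : z4 ^ rhoL A = _ := pow_card_zeros_before left (hA.2.2.2.2 _) z4
  have eB : z3 ^ rhoB A = _ := pow_card_zeros_after bottom (hA.2.2.2.1 _) z3
  have eR : z2 ^ rhoR A = _ := pow_card_zeros_after right (hA.2.2.2.2 _) z2
  rw [eT, eL, eB, eR]
  simp only [cornerMonomial, boundaryWeight, mul_zpow, prod_mul_distrib]
  rw [prod_prod_ite_zpow N.succ_pos, prod_prod_ite_zpow N.lt_succ_self,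
    prod_comm (f := fun i j => (if j = N then z2 ^ (N - i) else 1) ^ _),
    prod_comm (f := fun i j => (if j = 0 then z4 ^ i else 1) ^ _),
    prod_prod_ite_zpow N.lt_succ_self (fun i => z2 ^ (N - i)) fun i j => cornerDiff _ j i,
    prod_prod_ite_zpow N.succ_pos (fun i => z4 ^ i) fun i j => cornerDiff _ j i]
  simp only [prod_range, entry, Fin.val_zero, Fin.val_last, Nat.add_sub_cancel]

theorem lowerSum_one {x : K} (hx : x ≠ 0) {m : ℕ} {h : ℕ → ℕ → ℤ} (H : IsCornerSum (m + 1) h) :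
    lowerSum x m h (shiftArray fun _ _ => 1) =
      x ^ volumeDiff (m + 1) (lowerArray h) h * (x + 1) ^ (cellsEq (m + 1) h (-1)).card := by
  rw [lowerSum_eq hx H fun _ _ => one_ne_zero]
  simp [shiftArray, cornerMonomial, plaquetteRatio, add_comm]

/-- The quadruply-refined generating function at `y = x + 1` as a condensation sum. -/
theorem Zqua_eq_layerSum {x : K} (hx : x ≠ 0) (N : ℕ) (z1 z2 z3 z4 : K) :
    Zqua (N + 1) x (x + 1) z1 z2 z3 z4 =
      layerSum x N (boundaryWeight N z1 z2 z3 z4) fun _ _ => 1 := by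
  classical
  rw [Zqua, layerSum, ← sum_isASM_eq_sum_cornerSums (fun A => x ^ nuASM A * (x + 1) ^ muASM A *
    z1 ^ rhoT A * z2 ^ rhoR A * z3 ^ rhoB A * z4 ^ rhoL A)]
  intro A hA
  rw [cornerMonomial_boundaryWeight hA, lowerSum_one hx hA.isCornerSum, ← nuASM_eq hA, ← muASM_eq,
    zpow_natCast]
  ring

end Weights

section ExplicitArrays

variable {K : Type*} [Field K]

/-- The growth rate of the corner weights attached to the edge variables `a` and `b`. -/
def cornerRate (x a b : K) : K := (x * a + 1) * (x * b + 1) / (x + 1)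

/-- The reduced corner weight at the north-west and south-east corners. -/
def diagCorner (x a b : K) : ℕ → K
  | 0 => 1
  | l + 1 => diagCorner x a b l + x * (a * b) * cornerRate x a b ^ l

/-- The reduced corner weight at the north-east and south-west corners. -/
def antiCorner (N : ℕ) (x a b : K) : ℕ → K
  | 0 => (a * b) ^ N
  | l + 1 => x * antiCorner N x a b l + (a * b) ^ (N - (l + 1)) * cornerRate x a b ^ l

/-- The weight in the interior of the arrays, up to an index shift. -/
def bulkWeight (x : K) (l : ℕ) : K := (x + 1) ^ l.choose 2

/-- The weight on the edges of the arrays. -/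
def edgeWeight (x z : K) (l : ℕ) : K := (x * z + 1) ^ l * bulkWeight x l

/-- The array of size `m + 1` obtained by `l` condensation steps from the boundary weights. -/
def condensedArray (x z1 z2 z3 z4 : K) (l m i j : ℕ) : K :=
  if i = 0 then
    if j = 0 then bulkWeight x l * diagCorner x z1 z4 l
    else if j = m then bulkWeight x l * antiCorner (m + l) x z1 z2 l
    else z1 ^ j * edgeWeight x z1 l
  else if i = m then
    if j = 0 then bulkWeight x l * antiCorner (m + l) x z3 z4 l
    else if j = m then bulkWeight x l * diagCorner x z2 z3 l
    else z3 ^ (m - j) * edgeWeight x z3 l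
  else
    if j = 0 then z4 ^ i * edgeWeight x z4 l
    else if j = m then z2 ^ (m - i) * edgeWeight x z2 l
    else bulkWeight x (l + 1)

theorem bulkWeight_succ (x : K) (l : ℕ) : bulkWeight x (l + 1) = bulkWeight x l * (x + 1) ^ l := by
  rw [bulkWeight, Nat.choose_succ_succ', Nat.choose_one_right, bulkWeight, ← pow_add,
    add_comm l]

theorem edgeWeight_succ_mul (x z : K) (l : ℕ) :
    edgeWeight x z (l + 1) * bulkWeight x l =
      (x * z + 1) * edgeWeight x z l * bulkWeight x (l + 1) := by
  simp only [edgeWeight]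
  ring

theorem edgeWeight_mul_edgeWeight {x : K} (hx : x + 1 ≠ 0) (a b : K) (l : ℕ) :
    edgeWeight x a l * edgeWeight x b l =
      bulkWeight x l * bulkWeight x (l + 1) * cornerRate x a b ^ l := by
  have : (x * a + 1) ^ l * (x * b + 1) ^ l = (x + 1) ^ l * cornerRate x a b ^ l := by
    rw [← mul_pow, ← mul_pow, cornerRate, mul_div_cancel₀ _ hx]
  rw [bulkWeight_succ, edgeWeight, edgeWeight]
  linear_combination bulkWeight x l ^ 2 * this

theorem diagCorner_step {x : K} (hx : x + 1 ≠ 0) (a b : K) (l : ℕ) :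
    bulkWeight x (l + 1) * diagCorner x a b (l + 1) * bulkWeight x l =
      bulkWeight x l * diagCorner x a b l * bulkWeight x (l + 1) +
        x * (a * edgeWeight x a l * (b * edgeWeight x b l)) := by
  rw [diagCorner]
  linear_combination -x * a * b * edgeWeight_mul_edgeWeight hx a b l

theorem antiCorner_step {x : K} (hx : x + 1 ≠ 0) (a b : K) (l m : ℕ) :
    bulkWeight x (l + 1) * antiCorner (m + (l + 1)) x a b (l + 1) * bulkWeight x l =
      a ^ m * edgeWeight x a l * (b ^ m * edgeWeight x b l) +
        x * (bulkWeight x l * antiCorner (m + 1 + l) x a b l * bulkWeight x (l + 1)) := by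
  rw [antiCorner, Nat.add_sub_cancel, mul_pow, show m + (l + 1) = m + 1 + l by omega]
  linear_combination -a ^ m * b ^ m * edgeWeight_mul_edgeWeight hx a b l

theorem condensedArray_interior (x z1 z2 z3 z4 : K) {l m i j : ℕ} (hi : i ≤ m) (hj : j ≤ m) :
    condensedArray x z1 z2 z3 z4 l (m + 2) (i + 1) (j + 1) = bulkWeight x (l + 1) := by
  rw [condensedArray, if_neg (by omega), if_neg (by omega), if_neg (by omega), if_neg (by omega)]

theorem condensedArray_step {x : K} (hx : x + 1 ≠ 0) (z1 z2 z3 z4 : K) {l m i j : ℕ} (hm : m ≠ 0)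
    (hi : i ≤ m) (hj : j ≤ m) :
    condensedArray x z1 z2 z3 z4 (l + 1) m i j * bulkWeight x l =
      condensedArray x z1 z2 z3 z4 l (m + 1) i j *
          condensedArray x z1 z2 z3 z4 l (m + 1) (i + 1) (j + 1) +
        x * (condensedArray x z1 z2 z3 z4 l (m + 1) i (j + 1) *
          condensedArray x z1 z2 z3 z4 l (m + 1) (i + 1) j) := by
  have hm1 : m ≠ m + 1 := by omega
  have hi1 : i ≠ m + 1 := by omega
  have hj1 : j ≠ m + 1 := by omega
  simp only [condensedArray, hi1, hj1, if_false, add_eq_zero, one_ne_zero, and_false,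
    Nat.add_right_cancel_iff, Nat.add_sub_add_right]
  have e1 := edgeWeight_succ_mul x z1 l
  have e2 := edgeWeight_succ_mul x z2 l
  have e3 := edgeWeight_succ_mul x z3 l
  have e4 := edgeWeight_succ_mul x z4 l
  obtain rfl | hi0 := eq_or_ne i 0
  · simp only [if_true, hm.symm, if_false]
    obtain rfl | hj0 := eq_or_ne j 0
    · simp only [if_true, hm.symm, if_false]
      have := diagCorner_step hx z1 z4 l
      linear_combination this
    · obtain rfl | hjm := eq_or_ne j m
      · simp only [if_true, hm, if_false]
        have := antiCorner_step hx z1 z2 l j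
        linear_combination this
      · simp only [hj0, hjm, if_false]
        linear_combination z1 ^ j * e1
  · obtain rfl | him := eq_or_ne i m
    · simp only [if_true, hm, if_false]
      obtain rfl | hj0 := eq_or_ne j 0
      · simp only [if_true, hm.symm, if_false]
        have := antiCorner_step hx z3 z4 l i
        linear_combination this
      · obtain rfl | hjm := eq_or_ne j i
        · simp only [if_true, hm, if_false]
          have := diagCorner_step hx z2 z3 l
          rw [Nat.add_sub_cancel_left]
          linear_combination this
        · simp only [hj0, hjm, if_false]
          rw [show i + 1 - j = i - j + 1 by omega]
          linear_combination z3 ^ (i - j) * e3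
    · simp only [hi0, him, if_false]
      obtain rfl | hj0 := eq_or_ne j 0
      · simp only [if_true, hm.symm, if_false]
        linear_combination z4 ^ i * e4
      · obtain rfl | hjm := eq_or_ne j m
        · simp only [if_true, hm, if_false]
          rw [show j + 1 - i = j - i + 1 by omega]
          linear_combination z2 ^ (j - i) * e2
        · simp only [hj0, hjm, if_false, bulkWeight_succ]
          ring

theorem condensedArray_zero (x z1 z2 z3 z4 : K) {N : ℕ} (hN : N ≠ 0) (i j : ℕ) :
    condensedArray x z1 z2 z3 z4 0 N i j = boundaryWeight N z1 z2 z3 z4 i j := by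
  simp only [condensedArray, boundaryWeight, edgeWeight, diagCorner, antiCorner, bulkWeight]
  split_ifs <;> simp_all [mul_pow]

/-- The value of the quadruply-refined generating function in terms of corner weights. -/
def apexValue (x z1 z2 z3 z4 : K) (l : ℕ) : K :=
  bulkWeight x l * (diagCorner x z1 z4 l * diagCorner x z2 z3 l +
    x * (antiCorner (l + 1) x z1 z2 l * antiCorner (l + 1) x z3 z4 l))

/-- The condensation hierarchy ending in the boundary weights. -/
def condensedHierarchy (x z1 z2 z3 z4 : K) (N m i j : ℕ) : K :=
  if N < m then 1
  else if m = 0 then apexValue x z1 z2 z3 z4 (N - 1)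
  else condensedArray x z1 z2 z3 z4 (N - m) m i j

theorem condensedHierarchy_step {x : K} (hx : x + 1 ≠ 0) (z1 z2 z3 z4 : K) {N m i j : ℕ}
    (hm : m < N) (hi : i ≤ m) (hj : j ≤ m) :
    condensedHierarchy x z1 z2 z3 z4 N m i j *
        condensedHierarchy x z1 z2 z3 z4 N (m + 2) (i + 1) (j + 1) =
      condensedHierarchy x z1 z2 z3 z4 N (m + 1) i j *
          condensedHierarchy x z1 z2 z3 z4 N (m + 1) (i + 1) (j + 1) +
        x * (condensedHierarchy x z1 z2 z3 z4 N (m + 1) i (j + 1) *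
          condensedHierarchy x z1 z2 z3 z4 N (m + 1) (i + 1) j) := by
  obtain ⟨l, rfl⟩ : ∃ l, N = m + 1 + l := ⟨N - (m + 1), by omega⟩
  have inner : condensedHierarchy x z1 z2 z3 z4 (m + 1 + l) (m + 2) (i + 1) (j + 1) =
      bulkWeight x l := by
    rw [condensedHierarchy]
    by_cases h1 : m + 1 + l < m + 2
    · rw [if_pos h1, show l = 0 by omega]
      simp [bulkWeight]
    · rw [if_neg h1, if_neg (by omega), condensedArray_interior _ _ _ _ _ hi hj]
      congr 1
      omega
  have outer : ∀ i j, condensedHierarchy x z1 z2 z3 z4 (m + 1 + l) (m + 1) i j =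
      condensedArray x z1 z2 z3 z4 l (m + 1) i j := fun i j => by
    rw [condensedHierarchy, if_neg (by omega), if_neg (by omega), Nat.add_sub_cancel_left]
  rw [inner, outer, outer, outer, outer, condensedHierarchy, if_neg (by omega)]
  split_ifs with hm0
  · obtain rfl : i = 0 := by omega
    obtain rfl : j = 0 := by omega
    subst hm0
    simp only [apexValue, condensedArray, zero_add, if_true, one_ne_zero, if_false, add_comm 1 l,
      Nat.add_sub_cancel]
    ring
  · rw [show m + 1 + l - m = l + 1 by omega]
    exact condensedArray_step hx _ _ _ _ hm0 hi hj

end ExplicitArrays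

section PositiveReals

variable {x z1 z2 z3 z4 : ℝ}

theorem cornerRate_pos {a b : ℝ} (hx : 0 < x) (ha : 0 < a) (hb : 0 < b) :
    0 < cornerRate x a b := by
  rw [cornerRate]
  positivity

theorem diagCorner_pos {a b : ℝ} (hx : 0 < x) (ha : 0 < a) (hb : 0 < b) (l : ℕ) :
    0 < diagCorner x a b l := by
  have := cornerRate_pos hx ha hb
  induction l with
  | zero => exact one_pos
  | succ l ih => rw [diagCorner]; positivity

theorem antiCorner_pos {a b : ℝ} (hx : 0 < x) (ha : 0 < a) (hb : 0 < b) (N l : ℕ) :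
    0 < antiCorner N x a b l := by
  have := cornerRate_pos hx ha hb
  induction l with
  | zero => rw [antiCorner]; positivity
  | succ l ih => rw [antiCorner]; positivity

theorem condensedHierarchy_pos (hx : 0 < x) (h1 : 0 < z1) (h2 : 0 < z2) (h3 : 0 < z3)
    (h4 : 0 < z4) (N m i j : ℕ) : 0 < condensedHierarchy x z1 z2 z3 z4 N m i j := by
  have hb : ∀ l, 0 < bulkWeight x l := fun l => by rw [bulkWeight]; positivity
  have he : ∀ z > 0, ∀ l, 0 < edgeWeight x z l := fun z hz l => by
    have := hb l
    rw [edgeWeight]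
    positivity
  have e1 := he z1 h1
  have e2 := he z2 h2
  have e3 := he z3 h3
  have e4 := he z4 h4
  have d14 := diagCorner_pos hx h1 h4
  have d23 := diagCorner_pos hx h2 h3
  have a12 := antiCorner_pos hx h1 h2
  have a34 := antiCorner_pos hx h3 h4
  simp only [condensedHierarchy, condensedArray, apexValue]
  split_ifs
  all_goals
    first
    | exact one_pos
    | exact hb _
    | exact mul_pos (hb _) (d14 _)
    | exact mul_pos (hb _) (d23 _)
    | exact mul_pos (hb _) (a12 _ _)
    | exact mul_pos (hb _) (a34 _ _)
    | exact mul_pos (pow_pos ‹_› _) (e1 _)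
    | exact mul_pos (pow_pos ‹_› _) (e2 _)
    | exact mul_pos (pow_pos ‹_› _) (e3 _)
    | exact mul_pos (pow_pos ‹_› _) (e4 _)
    | exact mul_pos (hb _) (add_pos (mul_pos (d14 _) (d23 _))
        (mul_pos hx (mul_pos (a12 _ _) (a34 _ _))))

end PositiveReals

/-- The quadruply-refined generating function in terms of corner weights. -/
theorem Zqua_eq_apexValue {x z1 z2 z3 z4 : ℝ} (hx : 0 < x) (h1 : 0 < z1) (h2 : 0 < z2)
    (h3 : 0 < z3) (h4 : 0 < z4) (l : ℕ) :
    Zqua (l + 2) x (x + 1) z1 z2 z3 z4 = apexValue x z1 z2 z3 z4 l := by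
  have apex := layerSum_eq_apex hx.ne' (condensedHierarchy x z1 z2 z3 z4 (l + 1))
    (fun m i j => (condensedHierarchy_pos hx h1 h2 h3 h4 _ m i j).ne') (l + 1)
    fun m hm i hi j hj => condensedHierarchy_step (by positivity) z1 z2 z3 z4 hm hi hj
  have last : condensedHierarchy x z1 z2 z3 z4 (l + 1) (l + 1 + 1) = fun _ _ => 1 := by
    funext i j
    simp [condensedHierarchy]
  have first : condensedHierarchy x z1 z2 z3 z4 (l + 1) (l + 1) =
      boundaryWeight (l + 1) z1 z2 z3 z4 := by
    funext i j
    rw [← condensedArray_zero x z1 z2 z3 z4 l.succ_ne_zero]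
    simp [condensedHierarchy]
  rw [Zqua_eq_layerSum hx.ne', ← first, ← last, apex]
  simp [condensedHierarchy]

section ClosedForms

variable {K : Type*} [Field K]

theorem cornerRate_comm (x a b : K) : cornerRate x a b = cornerRate x b a := by
  rw [cornerRate, cornerRate, mul_comm (x * a + 1)]

theorem diagCorner_comm (x a b : K) (l : ℕ) : diagCorner x a b l = diagCorner x b a l := by
  induction l with
  | zero => rfl
  | succ l ih => rw [diagCorner, diagCorner, ih, mul_comm a b, cornerRate_comm]

theorem diagCorner_closed {x : K} (hx : x + 1 ≠ 0) (a b : K) (l : ℕ) :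
    (x * b * a + b + a - 1) * diagCorner x a b l =
      a * b * (x + 1) * cornerRate x a b ^ l - (a - 1) * (b - 1) := by
  have rate : (x + 1) * cornerRate x a b = (x * a + 1) * (x * b + 1) := mul_div_cancel₀ _ hx
  induction l with
  | zero => rw [diagCorner]; ring
  | succ l ih =>
    rw [diagCorner, pow_succ]
    linear_combination ih - a * b * cornerRate x a b ^ l * rate

theorem antiCorner_closed {x : K} (hx : x + 1 ≠ 0) (a b : K) {N l : ℕ} (hl : l ≤ N) :
    (x * a * b - x * a - x * b - 1) * antiCorner N x a b l =
      x ^ (l + 1) * (a * b) ^ N * (a - 1) * (b - 1) -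
        (x + 1) * (a * b) ^ (N - l) * cornerRate x a b ^ l := by
  have rate : (x + 1) * cornerRate x a b = (x * a + 1) * (x * b + 1) := mul_div_cancel₀ _ hx
  induction l with
  | zero => rw [antiCorner]; simp only [Nat.sub_zero, pow_zero, zero_add]; ring
  | succ l ih =>
    have ih := ih (by omega)
    rw [show N - l = N - (l + 1) + 1 by omega] at ih
    rw [antiCorner]
    linear_combination x * ih + (a * b) ^ (N - (l + 1)) * cornerRate x a b ^ l * rate

theorem apexValue_formula {x : K} (hx : x + 1 ≠ 0) (z1 z2 z3 z4 : K) (t : ℕ) :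
    (x * z4 * z1 + z4 + z1 - 1) * (x * z1 * z2 - x * z1 - x * z2 - 1) *
        (x * z2 * z3 + z2 + z3 - 1) * (x * z3 * z4 - x * z3 - x * z4 - 1) *
        apexValue x z1 z2 z3 z4 (t + 3) =
      z1 * z2 * z3 * z4 * (x * z1 * z3 + 1) * (x * z2 * z4 + 1) *
          ((x * z1 + 1) * (x * z2 + 1) * (x * z3 + 1) * (x * z4 + 1)) ^ (t + 3) *
          (x + 1) ^ (t + 1).choose 2
      - ((z2 - 1) * (z3 - 1) * z4 * z1 * ((x * z4 + 1) * (x * z1 + 1)) ^ (t + 3) +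
         (z4 - 1) * (z1 - 1) * z2 * z3 * ((x * z2 + 1) * (x * z3 + 1)) ^ (t + 3)) *
          (x * z1 * z2 - x * z1 - x * z2 - 1) * (x * z3 * z4 - x * z3 - x * z4 - 1) *
          (x + 1) ^ (t + 2).choose 2
      - ((z3 - 1) * (z4 - 1) * z1 * z2 * (z3 * z4) ^ (t + 4) *
            ((x * z1 + 1) * (x * z2 + 1)) ^ (t + 3) +
         (z1 - 1) * (z2 - 1) * z3 * z4 * (z1 * z2) ^ (t + 4) *
            ((x * z3 + 1) * (x * z4 + 1)) ^ (t + 3)) *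
          (x * z4 * z1 + z4 + z1 - 1) * (x * z2 * z3 + z2 + z3 - 1) * x ^ (t + 5) *
          (x + 1) ^ (t + 2).choose 2
      + (z1 - 1) * (z2 - 1) * (z3 - 1) * (z4 - 1) *
          ((x * z1 * z2 - x * z1 - x * z2 - 1) * (x * z3 * z4 - x * z3 - x * z4 - 1) +
           (x * z4 * z1 + z4 + z1 - 1) * (x * z2 * z3 + z2 + z3 - 1) *
             (z1 * z2 * z3 * z4) ^ (t + 4) * x ^ (2 * t + 9)) *
          (x + 1) ^ (t + 3).choose 2 := by
  have rate : ∀ a b, (x + 1) ^ t * (x + 1) ^ 3 * cornerRate x a b ^ (t + 3) =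
      (x * a + 1) ^ (t + 3) * (x * b + 1) ^ (t + 3) := fun a b => by
    rw [← pow_add, ← mul_pow, ← mul_pow, cornerRate, mul_div_cancel₀ _ hx]
  have c2 : (x + 1) ^ (t + 2).choose 2 = (x + 1) ^ (t + 1).choose 2 * ((x + 1) ^ t * (x + 1)) := by
    rw [Nat.choose_succ_succ' (t + 1), Nat.choose_one_right]
    ring
  have c3 : (x + 1) ^ (t + 3).choose 2 =
      (x + 1) ^ (t + 1).choose 2 * ((x + 1) ^ t * (x + 1)) * ((x + 1) ^ t * (x + 1) ^ 2) := by
    rw [← c2, Nat.choose_succ_succ' (t + 2), Nat.choose_one_right]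
    ring
  have diag : ∀ a b, (x + 1) ^ t * (x + 1) ^ 3 *
      ((x * b * a + b + a - 1) * diagCorner x a b (t + 3)) =
      a * b * (x + 1) * ((x * a + 1) ^ (t + 3) * (x * b + 1) ^ (t + 3)) -
        (a - 1) * (b - 1) * ((x + 1) ^ t * (x + 1) ^ 3) := fun a b => by
    rw [diagCorner_closed hx, ← rate]
    ring
  have anti : ∀ a b, (x + 1) ^ t * (x + 1) ^ 3 *
      ((x * a * b - x * a - x * b - 1) * antiCorner (t + 4) x a b (t + 3)) =
      x ^ (t + 4) * (a * b) ^ (t + 4) * (a - 1) * (b - 1) * ((x + 1) ^ t * (x + 1) ^ 3) -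
        (x + 1) * (a * b) * ((x * a + 1) ^ (t + 3) * (x * b + 1) ^ (t + 3)) := fun a b => by
    rw [antiCorner_closed hx a b (Nat.le_add_right (t + 3) 1), ← rate, Nat.add_sub_cancel_left]
    ring
  have d14 := diag z1 z4
  have d23 := diag z3 z2
  rw [diagCorner_comm x z3 z2] at d23
  have a12 := anti z1 z2
  have a34 := anti z3 z4
  have hs : ((x + 1) ^ t * (x + 1) ^ 3) ^ 2 ≠ 0 :=
    pow_ne_zero _ (mul_ne_zero (pow_ne_zero _ hx) (pow_ne_zero _ hx))
  refine mul_left_cancel₀ hs ?_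
  rw [apexValue, bulkWeight, c2, c3]
  trans (x + 1) ^ (t + 1).choose 2 * ((x + 1) ^ t * (x + 1)) * ((x + 1) ^ t * (x + 1) ^ 2) *
    ((x * z1 * z2 - x * z1 - x * z2 - 1) * (x * z3 * z4 - x * z3 - x * z4 - 1) *
      ((x + 1) ^ t * (x + 1) ^ 3 *
        ((x * z4 * z1 + z4 + z1 - 1) * diagCorner x z1 z4 (t + 3))) *
      ((x + 1) ^ t * (x + 1) ^ 3 *
        ((x * z2 * z3 + z2 + z3 - 1) * diagCorner x z2 z3 (t + 3))) +
    x * ((x * z4 * z1 + z4 + z1 - 1) * (x * z2 * z3 + z2 + z3 - 1)) *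
      ((x + 1) ^ t * (x + 1) ^ 3 *
        ((x * z1 * z2 - x * z1 - x * z2 - 1) * antiCorner (t + 4) x z1 z2 (t + 3))) *
      ((x + 1) ^ t * (x + 1) ^ 3 *
        ((x * z3 * z4 - x * z3 - x * z4 - 1) * antiCorner (t + 4) x z3 z4 (t + 3))))
  · ring
  rw [d14, d23, a12, a34]
  simp only [mul_pow, show x ^ (2 * t + 9) = x ^ (t + 4) * x ^ (t + 4) * x by ring,
    pow_succ x (t + 4)]
  generalize (x + 1) ^ (t + 1).choose 2 = e
  generalize (x + 1) ^ t = s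
  generalize x ^ (t + 4) = y
  generalize (x * z1 + 1) ^ (t + 3) = p1
  generalize (x * z2 + 1) ^ (t + 3) = p2
  generalize (x * z3 + 1) ^ (t + 3) = p3
  generalize (x * z4 + 1) ^ (t + 3) = p4
  generalize z1 ^ (t + 4) = w1
  generalize z2 ^ (t + 4) = w2
  generalize z3 ^ (t + 4) = w3
  generalize z4 ^ (t + 4) = w4
  have key : (x * z1 * z2 - x * z1 - x * z2 - 1) * (x * z3 * z4 - x * z3 - x * z4 - 1) +
      x * ((x * z4 * z1 + z4 + z1 - 1) * (x * z2 * z3 + z2 + z3 - 1)) =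
      (x + 1) * (x * z1 * z3 + 1) * (x * z2 * z4 + 1) := by ring
  generalize x * z1 * z2 - x * z1 - x * z2 - 1 = d12 at key ⊢
  generalize x * z3 * z4 - x * z3 - x * z4 - 1 = d34 at key ⊢
  generalize x * z4 * z1 + z4 + z1 - 1 = d41 at key ⊢
  generalize x * z2 * z3 + z2 + z3 - 1 = d23 at key ⊢
  generalize (x * z1 * z3 + 1) = f13 at key ⊢
  generalize (x * z2 * z4 + 1) = f24 at key ⊢
  generalize x + 1 = r at key ⊢
  linear_combination e * s ^ 2 * r ^ 5 * z1 * z2 * z3 * z4 * p1 * p2 * p3 * p4 * key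

end ClosedForms

section Transfer

theorem map_Zqua {R S : Type*} [CommRing R] [CommRing S] (f : R →+* S) (n : ℕ)
    (x y z1 z2 z3 z4 : R) :
    f (Zqua n x y z1 z2 z3 z4) = Zqua n (f x) (f y) (f z1) (f z2) (f z3) (f z4) := by
  simp only [Zqua, map_sum, apply_ite f, map_mul, map_pow, map_zero]

/-- The difference of the two sides of the explicit formula for the quadruply-refined generating
function at `y = x + 1`. -/
noncomputable def quaDefect (n : ℕ) {R : Type*} [CommRing R] (x z1 z2 z3 z4 : R) : R :=
    (x * z4 * z1 + z4 + z1 - 1) * (x * z1 * z2 - x * z1 - x * z2 - 1) *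
        (x * z2 * z3 + z2 + z3 - 1) * (x * z3 * z4 - x * z3 - x * z4 - 1) *
        Zqua n x (x + 1) z1 z2 z3 z4 -
      (z1 * z2 * z3 * z4 * (x * z1 * z3 + 1) * (x * z2 * z4 + 1) *
          ((x * z1 + 1) * (x * z2 + 1) * (x * z3 + 1) * (x * z4 + 1)) ^ (n - 2) *
          (x + 1) ^ ((n - 4) * (n - 5) / 2)
      - ((z2 - 1) * (z3 - 1) * z4 * z1 * ((x * z4 + 1) * (x * z1 + 1)) ^ (n - 2) +
         (z4 - 1) * (z1 - 1) * z2 * z3 * ((x * z2 + 1) * (x * z3 + 1)) ^ (n - 2)) *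
          (x * z1 * z2 - x * z1 - x * z2 - 1) * (x * z3 * z4 - x * z3 - x * z4 - 1) *
          (x + 1) ^ ((n - 3) * (n - 4) / 2)
      - ((z3 - 1) * (z4 - 1) * z1 * z2 * (z3 * z4) ^ (n - 1) *
            ((x * z1 + 1) * (x * z2 + 1)) ^ (n - 2) +
         (z1 - 1) * (z2 - 1) * z3 * z4 * (z1 * z2) ^ (n - 1) *
            ((x * z3 + 1) * (x * z4 + 1)) ^ (n - 2)) *
          (x * z4 * z1 + z4 + z1 - 1) * (x * z2 * z3 + z2 + z3 - 1) * x ^ n *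
          (x + 1) ^ ((n - 3) * (n - 4) / 2)
      + (z1 - 1) * (z2 - 1) * (z3 - 1) * (z4 - 1) *
          ((x * z1 * z2 - x * z1 - x * z2 - 1) * (x * z3 * z4 - x * z3 - x * z4 - 1) +
           (x * z4 * z1 + z4 + z1 - 1) * (x * z2 * z3 + z2 + z3 - 1) *
             (z1 * z2 * z3 * z4) ^ (n - 1) * x ^ (2 * n - 1)) *
          (x + 1) ^ ((n - 2) * (n - 3) / 2))

theorem map_quaDefect {R S : Type*} [CommRing R] [CommRing S] (f : R →+* S) (n : ℕ)
    (x z1 z2 z3 z4 : R) :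
    f (quaDefect n x z1 z2 z3 z4) = quaDefect n (f x) (f z1) (f z2) (f z3) (f z4) := by
  simp only [quaDefect, map_Zqua, map_sub, map_add, map_mul, map_pow, map_one]

theorem quaDefect_of_pos {n : ℕ} (hn : 5 ≤ n) {x z1 z2 z3 z4 : ℝ} (hx : 0 < x) (h1 : 0 < z1)
    (h2 : 0 < z2) (h3 : 0 < z3) (h4 : 0 < z4) : quaDefect n x z1 z2 z3 z4 = 0 := by
  obtain ⟨t, rfl⟩ := Nat.exists_eq_add_of_le' hn
  have formula := apexValue_formula (by positivity) z1 z2 z3 z4 t (x := x)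
  rw [← Zqua_eq_apexValue hx h1 h2 h3 h4] at formula
  simp only [Nat.choose_two_right] at formula
  exact sub_eq_zero.2 formula

theorem quaDefect_eq_zero {R : Type*} [CommRing R] (x z1 z2 z3 z4 : R) {n : ℕ} (hn : 5 ≤ n) :
    quaDefect n x z1 z2 z3 z4 = 0 := by
  have generic : quaDefect n (MvPolynomial.X 0 : MvPolynomial (Fin 5) ℤ) (MvPolynomial.X 1)
      (MvPolynomial.X 2) (MvPolynomial.X 3) (MvPolynomial.X 4) = 0 := by
    refine MvPolynomial.map_injective (Int.castRingHom ℝ) Int.cast_injective ?_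
    refine MvPolynomial.funext_set (fun _ => Set.Ioi 0) (fun _ => Set.Ioi_infinite 0)
      fun v hv => ?_
    have pos : ∀ i, 0 < v i := fun i => hv i (Set.mem_univ i)
    simp only [map_quaDefect, MvPolynomial.map_X, map_zero, MvPolynomial.eval_X]
    exact quaDefect_of_pos hn (pos 0) (pos 1) (pos 2) (pos 3) (pos 4)
  have := congrArg (MvPolynomial.eval₂Hom (Int.castRingHom R) ![x, z1, z2, z3, z4]) generic
  simpa [map_quaDefect] using this

end Transfer

/-- Explicit formula for the quadruply-refined ASM generating function at
`y = x + 1`, stated for all values of the variables in any commutative ring,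
equivalently as an identity of polynomials in `ℤ[x,z1,z2,z3,z4]`. -/
theorem stmt17 {R : Type*} [CommRing R] (x z1 z2 z3 z4 : R) (n : ℕ) (hn : 5 ≤ n) :
    (x * z4 * z1 + z4 + z1 - 1) * (x * z1 * z2 - x * z1 - x * z2 - 1) *
        (x * z2 * z3 + z2 + z3 - 1) * (x * z3 * z4 - x * z3 - x * z4 - 1) *
        Zqua n x (x + 1) z1 z2 z3 z4 =
      z1 * z2 * z3 * z4 * (x * z1 * z3 + 1) * (x * z2 * z4 + 1) *
          ((x * z1 + 1) * (x * z2 + 1) * (x * z3 + 1) * (x * z4 + 1)) ^ (n - 2) *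
          (x + 1) ^ ((n - 4) * (n - 5) / 2)
      - ((z2 - 1) * (z3 - 1) * z4 * z1 * ((x * z4 + 1) * (x * z1 + 1)) ^ (n - 2) +
         (z4 - 1) * (z1 - 1) * z2 * z3 * ((x * z2 + 1) * (x * z3 + 1)) ^ (n - 2)) *
          (x * z1 * z2 - x * z1 - x * z2 - 1) * (x * z3 * z4 - x * z3 - x * z4 - 1) *
          (x + 1) ^ ((n - 3) * (n - 4) / 2)
      - ((z3 - 1) * (z4 - 1) * z1 * z2 * (z3 * z4) ^ (n - 1) *
            ((x * z1 + 1) * (x * z2 + 1)) ^ (n - 2) +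
         (z1 - 1) * (z2 - 1) * z3 * z4 * (z1 * z2) ^ (n - 1) *
            ((x * z3 + 1) * (x * z4 + 1)) ^ (n - 2)) *
          (x * z4 * z1 + z4 + z1 - 1) * (x * z2 * z3 + z2 + z3 - 1) * x ^ n *
          (x + 1) ^ ((n - 3) * (n - 4) / 2)
      + (z1 - 1) * (z2 - 1) * (z3 - 1) * (z4 - 1) *
          ((x * z1 * z2 - x * z1 - x * z2 - 1) * (x * z3 * z4 - x * z3 - x * z4 - 1) +
           (x * z4 * z1 + z4 + z1 - 1) * (x * z2 * z3 + z2 + z3 - 1) *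
             (z1 * z2 * z3 * z4) ^ (n - 1) * x ^ (2 * n - 1)) *
          (x + 1) ^ ((n - 2) * (n - 3) / 2) := by
  exact sub_eq_zero.1 (quaDefect_eq_zero x z1 z2 z3 z4 hn)
end

section
/- Let n ≥ 1 and 1 ≤ m ≤ n, and let 1 ≤ k_1 < … < k_m ≤ n. Then, as an identity of polynomials in ℤ[x,y,z_1,…,z_m]: ∏_{1≤i<j≤m} (z_i − z_j) · ∏_{i=1}^{m−1} Z_{n−i}(x,y) · Z^{k_1,…,k_m}_n( x, y; z_1,…,z_m; x·z_1²+(y−x−1)·z_1+1, …, x·z_m²+(y−x−1)·z_m+1 ) = det_{1≤i,j≤m}( z_i^{j−1}·(z_i−1)^{m−j}·Z_{n−j+1}(x,y;z_i) ). In particular, for fixed n and m the left-hand side is independent of the choice of rows k_1,…,k_m. -/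
open Finset

/-- `ν^{row r}(A)`, the number of columns `j` such that the partial column sum
of column `j` strictly above row `r` equals the partial row sum of row `r` up
to (and including) column `j`. -/
def nuRow {n : ℕ} (A : Fin n → Fin n → ℤ) (r : Fin n) : ℕ :=
  (univ.filter (fun j : Fin n =>
    (∑ i' ∈ univ.filter (fun i' : Fin n => i' < r), A i' j) =
      ∑ j' ∈ univ.filter (fun j' : Fin n => j' ≤ j), A r j')).card

/-- `μ^{row r}(A)`, the number of entries equal to `-1` in row `r` of `A`. -/
def muRow {n : ℕ} (A : Fin n → Fin n → ℤ) (r : Fin n) : ℕ :=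
  (univ.filter (fun j : Fin n => A r j = -1)).card

open Classical in
/-- The multi-row ASM generating function
`Z^{k_1,…,k_m}_n(x,y;z_1,…,z_m;w_1,…,w_m)
  = Σ_A x^{ν(A)} y^{μ(A) − Σ_i μ^{row k_i}(A)} ∏_i z_i^{ν^{row k_i}(A)} w_i^{μ^{row k_i}(A)}`. -/
noncomputable def Zmulti (n m : ℕ) (k : Fin m → Fin n) {R : Type*} [CommRing R]
    (x y : R) (z w : Fin m → R) : R :=
  ∑ e : Fin n → Fin n → Fin 3,
    if IsASM (asmMat e) then
      x ^ nuASM (asmMat e) *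
        y ^ (muASM (asmMat e) - ∑ i : Fin m, muRow (asmMat e) (k i)) *
        ∏ i : Fin m, z i ^ nuRow (asmMat e) (k i) * w i ^ muRow (asmMat e) (k i)
    else 0

namespace SixVertex

variable {R : Type*} [CommRing R]

/-- The integer in `{-1, 0, 1}` encoded by an element of `Fin 3`. -/
def entry (a : Fin 3) : ℤ := (a : ℤ) - 1

/-- Six-vertex weight of a matrix entry `r` with partial column sum `c` above it and
partial row sum `h` up to and including it, in a row with spectral parameter `z`. -/
def vertexWeight (x y z : R) (h c r : ℤ) : R :=
  if (h = 0 ∨ h = 1) ∧ (c = 0 ∨ c = 1) ∧ (c + r = 0 ∨ c + r = 1) then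
    (if c = 1 ∧ h = 1 then x else 1) * (if c = h then z else 1) *
      (if r = -1 then x * z ^ 2 + (y - x - 1) * z + 1 else 1)
  else 0

/-- Weight of a row `r` below column sums `c`, with initial horizontal state `h` and
final horizontal state `1`. -/
def rowWeight {n : ℕ} (x y z : R) (h : ℤ) (c r : Fin n → ℤ) : R :=
  (∏ j, vertexWeight x y z (h + ∑ j' ∈ univ.filter (fun j' : Fin n => j' ≤ j), r j')
    (c j) (r j)) * if h + ∑ j, r j = 1 then 1 else 0

lemma rowWeight_cons {n : ℕ} (x y z : R) (h c₀ r₀ : ℤ) (c r : Fin n → ℤ) :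
    rowWeight x y z h (Fin.cons c₀ c : Fin (n + 1) → ℤ) (Fin.cons r₀ r : Fin (n + 1) → ℤ) =
      vertexWeight x y z (h + r₀) c₀ r₀ * rowWeight x y z (h + r₀) c r := by
  unfold rowWeight
  rw [Fin.prod_univ_succ, Fin.sum_univ_succ]
  simp only [Finset.sum_filter, Fin.sum_univ_succ, Fin.cons_zero, Fin.cons_succ, Fin.le_zero_iff,
    Fin.succ_ne_zero, Fin.zero_le, Fin.succ_le_succ_iff, if_true, if_false, add_assoc,
    Finset.sum_const_zero, add_zero, mul_assoc]

/-- Row transfer operator on functions of the column sums, from the horizontal state `h` to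
the horizontal state `1`. -/
def transfer (n : ℕ) (x y z : R) (h : ℤ) : ((Fin n → ℤ) → R) →ₗ[R] ((Fin n → ℤ) → R) where
  toFun ψ c := ∑ r : Fin n → Fin 3,
    rowWeight x y z h (c - entry ∘ r) (entry ∘ r) * ψ (c - entry ∘ r)
  map_add' ψ φ := by
    funext c
    simp [mul_add, Finset.sum_add_distrib]
  map_smul' a ψ := by
    funext c
    simp [Finset.mul_sum, mul_left_comm]

lemma transfer_apply (n : ℕ) (x y z : R) (h : ℤ) (ψ : (Fin n → ℤ) → R) (c : Fin n → ℤ) :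
    transfer n x y z h ψ c = ∑ r : Fin n → Fin 3,
      rowWeight x y z h (c - entry ∘ r) (entry ∘ r) * ψ (c - entry ∘ r) := rfl

/-- Restriction of a function of the column sums to a fixed sum in the first column. -/
def slice {α : Type*} {n : ℕ} (a : ℤ) (ψ : (Fin (n + 1) → ℤ) → α) : (Fin n → ℤ) → α :=
  fun c => ψ (Fin.cons a c)

lemma slice_ext {α : Type*} {n : ℕ} {ψ φ : (Fin (n + 1) → ℤ) → α} (h : ∀ a, slice a ψ = slice a φ) :
    ψ = φ := by
  funext c
  have := congrFun (h (c 0)) (Fin.tail c)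
  simpa [slice] using this

lemma slice_sub {n : ℕ} (a : ℤ) (ψ φ : (Fin (n + 1) → ℤ) → R) :
    slice a (ψ - φ) = slice a ψ - slice a φ := rfl

lemma slice_smul {n : ℕ} (a : ℤ) (b : R) (ψ : (Fin (n + 1) → ℤ) → R) :
    slice a (b • ψ) = b • slice a ψ := rfl

lemma slice_transfer {n : ℕ} (x y z : R) (h a : ℤ) (ψ : (Fin (n + 1) → ℤ) → R) :
    slice a (transfer (n + 1) x y z h ψ) = ∑ r : Fin 3,
      vertexWeight x y z (h + entry r) (a - entry r) (entry r) •
        transfer n x y z (h + entry r) (slice (a - entry r) ψ) := by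
  funext c
  simp only [slice, transfer_apply, Finset.sum_apply, Pi.smul_apply, smul_eq_mul]
  rw [← (Fin.consEquiv fun _ => Fin 3).sum_comp, Fintype.sum_prod_type]
  refine Finset.sum_congr rfl fun r₀ _ => ?_
  rw [Finset.mul_sum]
  refine Finset.sum_congr rfl fun r _ => ?_
  have h1 : entry ∘ (Fin.consEquiv fun _ => Fin 3) (r₀, r) =
      (Fin.cons (entry r₀) (entry ∘ r) : Fin (n + 1) → ℤ) := by
    funext j
    refine Fin.cases ?_ (fun j => ?_) j <;> simp [Fin.consEquiv]
  have h2 : (Fin.cons a c : Fin (n + 1) → ℤ) - (Fin.cons (entry r₀) (entry ∘ r)) =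
      (Fin.cons (a - entry r₀) (c - entry ∘ r) : Fin (n + 1) → ℤ) := by
    funext j
    refine Fin.cases ?_ (fun j => ?_) j <;> simp
  rw [h1, h2, rowWeight_cons, mul_assoc]

section

variable {n : ℕ} (x y z : R) (ψ : (Fin (n + 1) → ℤ) → R)

lemma slice_zero_transfer_zero :
    slice 0 (transfer (n + 1) x y z 0 ψ) = z • transfer n x y z 0 (slice 0 ψ) := by
  rw [slice_transfer, Fin.sum_univ_three]
  simp [vertexWeight, entry]

lemma slice_one_transfer_zero :
    slice 1 (transfer (n + 1) x y z 0 ψ) =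
      transfer n x y z 0 (slice 1 ψ) + transfer n x y z 1 (slice 0 ψ) := by
  rw [slice_transfer, Fin.sum_univ_three]
  simp [vertexWeight, entry]

lemma slice_zero_transfer_one :
    slice 0 (transfer (n + 1) x y z 1 ψ) = transfer n x y z 1 (slice 0 ψ) +
      (x * z ^ 2 + (y - x - 1) * z + 1) • transfer n x y z 0 (slice 1 ψ) := by
  rw [slice_transfer, Fin.sum_univ_three]
  simp [vertexWeight, entry, add_comm]

lemma slice_one_transfer_one :
    slice 1 (transfer (n + 1) x y z 1 ψ) = (x * z) • transfer n x y z 1 (slice 1 ψ) := by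
  rw [slice_transfer, Fin.sum_univ_three]
  simp [vertexWeight, entry]

lemma slice_transfer_of_ne {a : ℤ} (h : ℤ) (h₀ : a ≠ 0) (h₁ : a ≠ 1) :
    slice a (transfer (n + 1) x y z h ψ) = 0 := by
  rw [slice_transfer]
  refine Finset.sum_eq_zero fun r _ => ?_
  rw [vertexWeight, if_neg, zero_smul]
  simp [h₀, h₁]

end

lemma transfer_zero_zero (x y z : R) (ψ : (Fin 0 → ℤ) → R) : transfer 0 x y z 0 ψ = 0 := by
  funext c
  simp [transfer_apply, rowWeight]

lemma transfer_zero_one (x y z : R) (ψ : (Fin 0 → ℤ) → R) : transfer 0 x y z 1 ψ = ψ := by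
  funext c
  simp only [transfer_apply, rowWeight]
  simp
  congr 1
  exact Subsingleton.elim _ _

lemma slice_ext_cases {α : Type*} {n : ℕ} {ψ φ : (Fin (n + 1) → ℤ) → α}
    (h₀ : slice 0 ψ = slice 0 φ) (h₁ : slice 1 ψ = slice 1 φ)
    (h : ∀ a, a ≠ 0 → a ≠ 1 → slice a ψ = slice a φ) : ψ = φ := by
  refine slice_ext fun a => ?_
  by_cases ha : a = 0
  · rw [ha, h₀]
  · by_cases ha' : a = 1
    · rw [ha', h₁]
    · exact h a ha ha'

section Field

variable {K : Type*} [Field K] (x y : K)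

lemma exchange_relations (n : ℕ) : ∀ (ψ : (Fin n → ℤ) → K) (u v : K),
    transfer n x y u 0 (transfer n x y v 0 ψ) = transfer n x y v 0 (transfer n x y u 0 ψ) ∧
    transfer n x y u 1 (transfer n x y v 1 ψ) = transfer n x y v 1 (transfer n x y u 1 ψ) ∧
    (v - u) • transfer n x y u 1 (transfer n x y v 0 ψ) =
      (1 + (y - x - 1) * u + x * u * v) • transfer n x y v 0 (transfer n x y u 1 ψ) -
      (x * u ^ 2 + (y - x - 1) * u + 1) • transfer n x y u 0 (transfer n x y v 1 ψ) := by
  induction n with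
  | zero =>
    intro ψ u v
    simp [transfer_zero_zero, transfer_zero_one]
  | succ n ih =>
    intro ψ u v
    by_cases huv : u = v
    · subst huv
      refine ⟨rfl, rfl, ?_⟩
      rw [← sub_smul, sub_self, zero_smul]
      symm
      convert zero_smul K _ using 2
      ring
    have hne : v - u ≠ 0 := sub_ne_zero.2 (Ne.symm huv)
    obtain ⟨bb₀, dd₀, db₀⟩ := ih (slice 0 ψ) u v
    obtain ⟨bb₁, dd₁, db₁⟩ := ih (slice 1 ψ) u v
    obtain ⟨-, -, db₀'⟩ := ih (slice 0 ψ) v u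
    obtain ⟨-, -, db₁'⟩ := ih (slice 1 ψ) v u
    refine ⟨?_, ?_, ?_⟩ <;> refine slice_ext_cases ?_ ?_ ?_ <;>
    try simp only [slice_sub, slice_smul, slice_zero_transfer_zero,
      slice_one_transfer_zero, slice_zero_transfer_one, slice_one_transfer_one, map_add, map_smul,
      smul_add, smul_smul]
    all_goals try
      intro a h₀ h₁
      simp [slice_transfer_of_ne, h₀, h₁]
    all_goals apply smul_right_injective _ hne; simp only
    · linear_combination (norm := module) ((v - u) * u * v) • bb₀
    · linear_combination (norm := module) (v - u) • bb₁ + v • db₀ + u • db₀'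
    · linear_combination (norm := module) (v - u) • dd₀ + (x * v ^ 2 + (y - x - 1) * v + 1) • db₁ +
        (x * u ^ 2 + (y - x - 1) * u + 1) • db₁'
    · linear_combination (norm := module) ((v - u) * x * u * x * v) • dd₁
    · linear_combination (norm := module) ((v - u) * v) • db₀ +
        ((v - u) * (1 + (y - x - 1) * u + x * u * v) * v *
          (x * u ^ 2 + (y - x - 1) * u + 1)) • bb₁
    · linear_combination (norm := module) ((v - u) * x * u +
        (x * u ^ 2 + (y - x - 1) * u + 1) * (x * v ^ 2 + (y - x - 1) * v + 1)) • db₁ +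
        ((1 + (y - x - 1) * u + x * u * v) * (x * u ^ 2 + (y - x - 1) * u + 1)) • db₁' +
        ((v - u) * (1 + (y - x - 1) * u + x * u * v)) • dd₀

end Field

section Amplitude

variable {K : Type*} [Field K] (x y : K)

/-- The function of the column sums above the first row. -/
def vacuum (R : Type*) [CommRing R] (n : ℕ) : (Fin n → ℤ) → R := fun c => if c = 0 then 1 else 0

lemma slice_zero_vacuum (n : ℕ) : slice 0 (vacuum R (n + 1)) = vacuum R n := by
  funext c
  have : (Fin.cons 0 c : Fin (n + 1) → ℤ) = 0 ↔ c = 0 := by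
    simp [funext_iff, Fin.forall_fin_succ]
  simp [slice, vacuum, this]

lemma slice_vacuum_of_ne (n : ℕ) {a : ℤ} (ha : a ≠ 0) : slice a (vacuum R (n + 1)) = 0 := by
  funext c
  have : (Fin.cons a c : Fin (n + 1) → ℤ) ≠ 0 := fun h => ha (by simpa using congrFun h 0)
  simp [slice, vacuum, this]

lemma transfer_one_vacuum (x y z : R) (n : ℕ) :
    transfer n x y z 1 (vacuum R n) = vacuum R n := by
  induction n with
  | zero => exact transfer_zero_one ..
  | succ n ih =>
    refine slice_ext_cases ?_ ?_ fun a h₀ h₁ => ?_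
    · simp [slice_zero_transfer_one, slice_zero_vacuum, slice_vacuum_of_ne, ih]
    · simp [slice_one_transfer_one, slice_vacuum_of_ne]
    · simp [slice_transfer_of_ne, slice_vacuum_of_ne, h₀, h₁]

instance leftCommutative_transfer (n : ℕ) :
    LeftCommutative fun (u : K) (ψ : (Fin n → ℤ) → K) => transfer n x y u 0 ψ :=
  ⟨fun u v ψ => (exchange_relations x y n ψ u v).1⟩

/-- The result of applying row transfer operators with spectral parameters `s` to the vacuum. -/
noncomputable def amplitude (n : ℕ) (s : Multiset K) : (Fin n → ℤ) → K :=
  s.foldr (fun u ψ => transfer n x y u 0 ψ) (vacuum K n)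

lemma amplitude_zero (n : ℕ) : amplitude x y n 0 = vacuum K n := rfl

lemma amplitude_cons (n : ℕ) (u : K) (s : Multiset K) :
    amplitude x y n (u ::ₘ s) = transfer n x y u 0 (amplitude x y n s) :=
  Multiset.foldr_cons ..

/-- The diagonal exchange coefficient. -/
def exchangeDiag (u v : K) : K := (1 + (y - x - 1) * u + x * u * v) / (v - u)

/-- The off-diagonal exchange coefficient. -/
def exchangeOff (u v : K) : K := -(x * u ^ 2 + (y - x - 1) * u + 1) / (v - u)

variable {x y}

lemma transfer_one_transfer_zero {n : ℕ} {u v : K} (huv : u ≠ v) (ψ : (Fin n → ℤ) → K) :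
    transfer n x y u 1 (transfer n x y v 0 ψ) =
      exchangeDiag x y u v • transfer n x y v 0 (transfer n x y u 1 ψ) +
      exchangeOff x y u v • transfer n x y u 0 (transfer n x y v 1 ψ) := by
  have hne : v - u ≠ 0 := sub_ne_zero.2 huv.symm
  apply smul_right_injective _ hne
  simp only
  rw [(exchange_relations x y n ψ u v).2.2, smul_add, smul_smul, smul_smul, exchangeDiag,
    exchangeOff, mul_div_cancel₀ _ hne, mul_div_cancel₀ _ hne]
  module

lemma exchange_identity {u v w : K} (huv : u ≠ v) (huw : u ≠ w) (hvw : v ≠ w) :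
    exchangeDiag x y u v * exchangeOff x y u w + exchangeOff x y u v * exchangeOff x y v w =
      exchangeOff x y u w * exchangeDiag x y w v := by
  have h1 : v - u ≠ 0 := sub_ne_zero.2 huv.symm
  have h2 : w - u ≠ 0 := sub_ne_zero.2 huw.symm
  have h3 : w - v ≠ 0 := sub_ne_zero.2 hvw.symm
  have h4 : v - w ≠ 0 := sub_ne_zero.2 hvw
  unfold exchangeDiag exchangeOff
  field_simp
  ring

lemma transfer_one_amplitude [DecidableEq K] (n : ℕ) (s : Finset K) : ∀ u ∉ s,
    transfer n x y u 1 (amplitude x y n s.val) =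
      (∏ v ∈ s, exchangeDiag x y u v) • amplitude x y n s.val +
      ∑ k ∈ s, (exchangeOff x y u k * ∏ v ∈ s.erase k, exchangeDiag x y k v) •
        transfer n x y u 0 (amplitude x y n (s.erase k).val) := by
  induction s using Finset.induction_on with
  | empty =>
    intro u _
    simp [amplitude_zero, transfer_one_vacuum]
  | insert a s ha ih =>
    intro u hu
    have hua : u ≠ a := fun h => hu (h ▸ Finset.mem_insert_self ..)
    have hus : u ∉ s := fun h => hu (Finset.mem_insert_of_mem h)
    rw [Finset.insert_val_of_notMem ha, amplitude_cons, transfer_one_transfer_zero hua, ih u hus,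
      ih a ha, Finset.prod_insert ha, Finset.sum_insert ha, Finset.erase_insert ha]
    have key : ∀ k ∈ s, (exchangeOff x y u k *
          ∏ v ∈ (insert a s).erase k, exchangeDiag x y k v) •
        transfer n x y u 0 (amplitude x y n ((insert a s).erase k).val) =
        exchangeDiag x y u a • transfer n x y a 0
          ((exchangeOff x y u k * ∏ v ∈ s.erase k, exchangeDiag x y k v) •
            transfer n x y u 0 (amplitude x y n (s.erase k).val)) +
        exchangeOff x y u a • transfer n x y u 0
          ((exchangeOff x y a k * ∏ v ∈ s.erase k, exchangeDiag x y k v) •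
            transfer n x y a 0 (amplitude x y n (s.erase k).val)) := by
      intro k hk
      have hak : a ≠ k := fun h => ha (h ▸ hk)
      have huk : u ≠ k := fun h => hus (h ▸ hk)
      have hae : a ∉ s.erase k := fun h => ha (Finset.mem_of_mem_erase h)
      rw [Finset.erase_insert_of_ne hak, Finset.prod_insert hae,
        Finset.insert_val_of_notMem hae, amplitude_cons, map_smul, map_smul,
        (exchange_relations x y n _ a u).1, smul_smul, smul_smul, ← add_smul, ← mul_assoc,
        ← exchange_identity hua huk hak]
      congr 1
      ring
    rw [Finset.sum_congr rfl key, Finset.sum_add_distrib, ← Finset.smul_sum, ← Finset.smul_sum,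
      ← map_sum, ← map_sum, map_add, map_add, map_smul, map_smul]
    module

lemma slice_zero_amplitude (n : ℕ) (s : Multiset K) :
    slice 0 (amplitude x y (n + 1) s) = s.prod • amplitude x y n s := by
  induction s using Multiset.induction_on with
  | empty => simp [amplitude_zero, slice_zero_vacuum]
  | cons a s ih =>
    rw [amplitude_cons, slice_zero_transfer_zero, ih, amplitude_cons, map_smul, smul_smul,
      Multiset.prod_cons]

lemma one_add_mul_exchangeOff {u v : K} (huv : u ≠ v) :
    1 + v * exchangeOff x y u v = u * exchangeDiag x y v u := by
  have h1 : v - u ≠ 0 := sub_ne_zero.2 huv.symm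
  have h2 : u - v ≠ 0 := sub_ne_zero.2 huv
  unfold exchangeDiag exchangeOff
  field_simp
  ring

lemma slice_one_amplitude [DecidableEq K] (n : ℕ) (s : Finset K) :
    slice 1 (amplitude x y (n + 1) s.val) =
      ∑ k ∈ s, (∏ v ∈ s.erase k, v * exchangeDiag x y k v) • amplitude x y n (s.erase k).val := by
  induction s using Finset.induction_on with
  | empty => simp [amplitude_zero, slice_vacuum_of_ne]
  | insert a s ha ih =>
    rw [Finset.insert_val_of_notMem ha, amplitude_cons, slice_one_transfer_zero, ih,
      slice_zero_amplitude, map_smul, transfer_one_amplitude n s a ha, Finset.sum_insert ha,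
      Finset.erase_insert ha, map_sum, smul_add, Finset.smul_sum, smul_smul,
      Finset.prod_mul_distrib]
    have hs : s.val.prod = ∏ v ∈ s, v := by rw [Finset.prod, Multiset.map_id']
    rw [hs, add_left_comm, ← Finset.sum_add_distrib]
    congr 1
    refine Finset.sum_congr rfl fun k hk => ?_
    have hak : a ≠ k := fun h => ha (h ▸ hk)
    have hae : a ∉ s.erase k := fun h => ha (Finset.mem_of_mem_erase h)
    rw [Finset.erase_insert_of_ne hak, Finset.prod_insert hae, Finset.insert_val_of_notMem hae,
      amplitude_cons, ← one_add_mul_exchangeOff hak, map_smul, smul_smul, ← add_smul,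
      Finset.prod_mul_distrib, ← Finset.mul_prod_erase s (fun v => v) hk]
    congr 1
    ring

end Amplitude

section PartitionFunction

/-- Weighted sum over the fillings of `N` rows with spectral parameters `z` whose column
sums are `c`. -/
def rowsSum (n : ℕ) {N : ℕ} (x y : R) (z : Fin N → R) (c : Fin n → ℤ) : R :=
  ∑ e : Fin N → Fin n → Fin 3,
    (∏ i, rowWeight x y (z i) 0
      (fun j => ∑ i' ∈ univ.filter (fun i' : Fin N => i' < i), entry (e i' j)) (entry ∘ e i)) *
      if (fun j => ∑ i, entry (e i j)) = c then 1 else 0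

lemma rowsSum_zero (n : ℕ) (x y : R) (z : Fin 0 → R) : rowsSum n x y z = vacuum R n := by
  funext c
  simp [rowsSum, vacuum, funext_iff, eq_comm]

lemma rowsSum_succ (n : ℕ) {N : ℕ} (x y : R) (z : Fin (N + 1) → R) :
    rowsSum n x y z =
      transfer n x y (z (Fin.last N)) 0 (rowsSum n x y fun i => z i.castSucc) := by
  funext c
  rw [transfer_apply, rowsSum, ← (Fin.snocEquiv fun _ => Fin n → Fin 3).sum_comp,
    Fintype.sum_prod_type]
  refine Finset.sum_congr rfl fun r _ => ?_
  rw [rowsSum, Finset.mul_sum]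
  refine Finset.sum_congr rfl fun e _ => ?_
  have hlast : ∀ i : Fin N, ¬ Fin.last N < i.castSucc := fun i => (Fin.castSucc_lt_last i).not_gt
  simp only [Fin.prod_univ_castSucc, Finset.sum_filter, Fin.sum_univ_castSucc, Fin.snocEquiv,
    Equiv.coe_fn_mk, Fin.snoc_castSucc, Fin.snoc_last, Fin.castSucc_lt_castSucc_iff,
    Fin.castSucc_lt_last, lt_irrefl, if_true, if_false, add_zero, hlast]
  have h : ((fun j => ∑ i, entry (e i j) + entry (r j)) = c) ↔
      (fun j => ∑ i, entry (e i j)) = c - entry ∘ r := by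
    rw [eq_sub_iff_add_eq]
    rfl
  by_cases hc : (fun j => ∑ i, entry (e i j)) = c - entry ∘ r
  · rw [if_pos (h.2 hc), if_pos hc, hc]
    ring
  · rw [if_neg (fun h' => hc (h.1 h')), if_neg hc]
    ring

/-- The domain-wall partition function with row spectral parameters `z`. -/
def partitionFunction {n : ℕ} (x y : R) (z : Fin n → R) : R := rowsSum n x y z fun _ => 1

lemma map_vertexWeight {S : Type*} [CommRing S] (φ : R →+* S) (x y z : R) (h c r : ℤ) :
    φ (vertexWeight x y z h c r) = vertexWeight (φ x) (φ y) (φ z) h c r := by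
  unfold vertexWeight
  split_ifs <;> simp

lemma map_rowWeight {S : Type*} [CommRing S] (φ : R →+* S) {n : ℕ} (x y z : R) (h : ℤ)
    (c r : Fin n → ℤ) :
    φ (rowWeight x y z h c r) = rowWeight (φ x) (φ y) (φ z) h c r := by
  simp [rowWeight, map_prod, map_vertexWeight, apply_ite φ]

lemma map_partitionFunction {S : Type*} [CommRing S] (φ : R →+* S) {n : ℕ} (x y : R)
    (z : Fin n → R) :
    φ (partitionFunction x y z) = partitionFunction (φ x) (φ y) fun i => φ (z i) := by
  simp only [partitionFunction, rowsSum, map_sum, map_mul, map_prod, map_rowWeight, apply_ite φ,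
    map_one, map_zero]

variable {K : Type*} [Field K] (x y : K)

lemma rowsSum_eq_amplitude (n : ℕ) {N : ℕ} (z : Fin N → K) :
    rowsSum n x y z = amplitude x y n (Finset.univ.val.map z) := by
  induction N with
  | zero => simp [rowsSum_zero, amplitude_zero]
  | succ N ih =>
    have h : Finset.univ.val.map z =
        z (Fin.last N) ::ₘ Finset.univ.val.map fun i : Fin N => z i.castSucc := by
      rw [Fin.univ_castSuccEmb, Finset.cons_val, Multiset.map_cons, Finset.map_val,
        Multiset.map_map]
      rfl
    rw [rowsSum_succ, ih, h, amplitude_cons]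

lemma partitionFunction_eq_amplitude {n : ℕ} (z : Fin n → K) :
    partitionFunction x y z = amplitude x y n (Finset.univ.val.map z) fun _ => 1 := by
  rw [partitionFunction, rowsSum_eq_amplitude]

lemma partitionFunction_comp_perm_of_field {n : ℕ} (z : Fin n → K) (σ : Equiv.Perm (Fin n)) :
    partitionFunction x y (z ∘ σ) = partitionFunction x y z := by
  have h : Finset.univ.val.map (z ∘ σ) = Finset.univ.val.map z := by
    rw [← Multiset.map_map]
    congr 1
    simp
  rw [partitionFunction_eq_amplitude, partitionFunction_eq_amplitude, h]

lemma partitionFunction_zero (z : Fin 0 → K) : partitionFunction x y z = 1 := by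
  rw [partitionFunction, rowsSum_zero, vacuum, if_pos (Subsingleton.elim _ _)]

lemma partitionFunction_succ {n : ℕ} (z : Fin (n + 1) → K) (hz : Function.Injective z) :
    partitionFunction x y z = ∑ k, (∏ i, z (k.succAbove i) *
      exchangeDiag x y (z k) (z (k.succAbove i))) *
        partitionFunction x y (z ∘ k.succAbove) := by
  classical
  have h : Finset.univ.val.map z = (Finset.univ.map ⟨z, hz⟩).val := by simp
  have h1 := congrFun (slice_one_amplitude (x := x) (y := y) n (Finset.univ.map ⟨z, hz⟩))
    fun _ => 1
  have h2 : (Fin.cons 1 fun _ => 1 : Fin (n + 1) → ℤ) = fun _ => 1 := by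
    funext j
    refine Fin.cases ?_ (fun j => ?_) j <;> simp
  have h3 : ∀ k : Fin (n + 1), (Finset.univ.map ⟨z, hz⟩).erase (z k) =
      Finset.univ.map ⟨z ∘ k.succAbove, hz.comp Fin.succAbove_right_injective⟩ := by
    intro k
    ext a
    simp only [Finset.mem_erase, Finset.mem_map, Finset.mem_univ, true_and,
      Function.Embedding.coeFn_mk, Function.comp_apply]
    constructor
    · rintro ⟨hne, i, rfl⟩
      obtain ⟨j, rfl⟩ := Fin.exists_succAbove_eq (fun h => hne (congrArg z h))
      exact ⟨j, rfl⟩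
    · rintro ⟨j, rfl⟩
      exact ⟨fun h => Fin.succAbove_ne k j (hz h), _, rfl⟩
  rw [slice, h2] at h1
  rw [partitionFunction_eq_amplitude, h, h1, Finset.sum_map, Finset.sum_apply]
  refine Finset.sum_congr rfl fun k _ => ?_
  simp only [Function.Embedding.coeFn_mk, Pi.smul_apply, smul_eq_mul]
  rw [h3, Finset.prod_map, partitionFunction_eq_amplitude]
  simp

end PartitionFunction

section Determinant

/-- The complete homogeneous symmetric polynomial of degree `k` in two variables. -/
def complHom (s t : R) : ℕ → R
  | 0 => 1
  | k + 1 => s ^ (k + 1) + t * complHom s t k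

lemma sum_complHom (s t : R) (q : ℕ → R) (n : ℕ) :
    ∑ j ∈ Finset.range (n + 1), (q j - t * q (j + 1)) * complHom s t j +
      t * q (n + 1) * complHom s t n = ∑ j ∈ Finset.range (n + 1), q j * s ^ j := by
  induction n with
  | zero =>
    simp [complHom]
  | succ n ih =>
    rw [Finset.sum_range_succ, Finset.sum_range_succ _ (n + 1), ← ih, complHom]
    ring

lemma det_eq_sum_of_last_column {n : ℕ} (M : Matrix (Fin (n + 1)) (Fin (n + 1)) R)
    (c : Fin (n + 1) → R) (hc : c (Fin.last n) = 1) :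
    M.det = ∑ i : Fin (n + 1), (-1) ^ ((i : ℕ) + n) * (∑ j, c j * M i j) *
      (M.submatrix i.succAbove Fin.castSucc).det := by
  have h := Matrix.det_updateCol_sum M (Fin.last n) c
  rw [hc, one_smul] at h
  rw [← h, Matrix.det_succ_column _ (Fin.last n)]
  refine Finset.sum_congr rfl fun i _ => ?_
  rw [Fin.val_last, Matrix.updateCol_self, Fin.succAbove_last]
  congr 2
  ext a b
  simp

open Polynomial in
lemma det_complHom_succ {n : ℕ} (s t : Fin (n + 1) → R) :
    (Matrix.of fun i j : Fin (n + 1) => complHom (s i) (t i) j).det =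
      ∑ k : Fin (n + 1), (-1) ^ ((k : ℕ) + n) * (∏ i, (s k - t (k.succAbove i))) *
        (Matrix.of fun i j : Fin n =>
          complHom (s (k.succAbove i)) (t (k.succAbove i)) j).det := by
  nontriviality R
  have hmonic : (∏ l, (X - C (t l))).Monic := monic_prod_of_monic _ _ fun l _ => monic_X_sub_C _
  have hdeg : (∏ l, (X - C (t l))).natDegree = n + 1 := by
    rw [natDegree_prod_of_monic _ _ fun l _ => monic_X_sub_C _]
    simp
  rw [det_eq_sum_of_last_column _ (fun j => (∏ l, (X - C (t l))).coeff (j + 1))]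
  · refine Finset.sum_congr rfl fun k _ => ?_
    congr 2
    set Q : R[X] := ∏ i, (X - C (t (k.succAbove i))) with hQ
    have hQdeg : Q.natDegree < n + 1 := by
      rw [hQ, natDegree_prod_of_monic _ _ fun l _ => monic_X_sub_C _]
      simp
    have h := sum_complHom (s k) (t k) Q.coeff n
    rw [coeff_eq_zero_of_natDegree_lt hQdeg, mul_zero, zero_mul, add_zero,
      ← eval_eq_sum_range' hQdeg] at h
    have he : Q.eval (s k) = ∏ i, (s k - t (k.succAbove i)) := by
      rw [hQ, eval_prod]
      simp
    rw [← he, ← h, Finset.sum_range]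
    refine Finset.sum_congr rfl fun j _ => ?_
    rw [Fin.prod_univ_succAbove _ k, ← hQ, sub_mul, coeff_sub, coeff_X_mul, coeff_C_mul]
    rfl
  · simpa [hdeg] using hmonic.coeff_natDegree

open Polynomial in
lemma det_vandermonde_succAbove {n : ℕ} (s : Fin (n + 1) → R) (k : Fin (n + 1)) :
    (Matrix.vandermonde s).det = (-1) ^ ((k : ℕ) + n) * (∏ i, (s k - s (k.succAbove i))) *
      (Matrix.vandermonde (s ∘ k.succAbove)).det := by
  nontriviality R
  set Q : R[X] := ∏ i, (X - C (s (k.succAbove i))) with hQ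
  have hmonic : Q.Monic := monic_prod_of_monic _ _ fun l _ => monic_X_sub_C _
  have hdeg : Q.natDegree = n := by
    rw [hQ, natDegree_prod_of_monic _ _ fun l _ => monic_X_sub_C _]
    simp
  have he : ∀ a, ∑ j : Fin (n + 1), Q.coeff j * a ^ (j : ℕ) =
      ∏ i, (a - s (k.succAbove i)) := by
    intro a
    rw [Fin.sum_univ_eq_sum_range (fun j => Q.coeff j * a ^ j),
      ← eval_eq_sum_range' (hdeg ▸ Nat.lt_succ_self _), hQ, eval_prod]
    simp
  rw [det_eq_sum_of_last_column _ (fun j => Q.coeff j)]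
  · rw [Finset.sum_eq_single k]
    · simp only [Matrix.vandermonde_apply, he]
      rfl
    · intro i _ hik
      obtain ⟨j, rfl⟩ := Fin.exists_succAbove_eq hik
      simp only [Matrix.vandermonde_apply, he]
      rw [Finset.prod_eq_zero (Finset.mem_univ j) (sub_self _), mul_zero, zero_mul]
    · simp
  · simpa [hdeg] using hmonic.coeff_natDegree

variable {K : Type*} [Field K] {x y : K}

lemma mul_exchangeDiag {u v : K} (hu : u ≠ 0) (hv : v ≠ 0) (huv : u ≠ v) :
    v * exchangeDiag x y u v * (u⁻¹ - v⁻¹) = u⁻¹ - (x + 1 - y - x * v) := by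
  have h1 : v - u ≠ 0 := sub_ne_zero.2 huv.symm
  unfold exchangeDiag
  field_simp
  ring

lemma partitionFunction_mul_det_vandermonde {n : ℕ} (z : Fin n → K) (hz : Function.Injective z)
    (h₀ : ∀ i, z i ≠ 0) :
    partitionFunction x y z * (Matrix.vandermonde fun i => (z i)⁻¹).det =
      (Matrix.of fun i j : Fin n => complHom (z i)⁻¹ (x + 1 - y - x * z i) j).det := by
  induction n with
  | zero => simp [partitionFunction_zero]
  | succ n ih =>
    rw [det_complHom_succ (fun i => (z i)⁻¹) (fun i => x + 1 - y - x * z i),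
      partitionFunction_succ x y z hz, Finset.sum_mul]
    refine Finset.sum_congr rfl fun k _ => ?_
    have hk := ih (z ∘ k.succAbove) (hz.comp Fin.succAbove_right_injective) fun i => h₀ _
    simp only [Function.comp_apply] at hk
    rw [← hk, det_vandermonde_succAbove _ k]
    have h : ∏ i, ((z k)⁻¹ - (x + 1 - y - x * z (k.succAbove i))) =
        (∏ i, z (k.succAbove i) * exchangeDiag x y (z k) (z (k.succAbove i))) *
          ∏ i, ((z k)⁻¹ - (z (k.succAbove i))⁻¹) := by
      rw [← Finset.prod_mul_distrib]
      refine Finset.prod_congr rfl fun i _ => ?_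
      exact (mul_exchangeDiag (h₀ _) (h₀ _) fun h => Fin.succAbove_ne k i (hz h).symm).symm
    rw [h]
    simp only [Function.comp_def]
    ring

end Determinant

section ReducedDeterminant

/-- The matrix of values of the functions `V · 0, V · 1, …` at the points `p`. -/
def evalMatrix {P : Type*} {n : ℕ} (V : P → ℕ → R) (p : Fin n → P) : Matrix (Fin n) (Fin n) R :=
  Matrix.of fun i j => V (p i) j

variable {K P : Type*} [Field K]

lemma exists_reduced_coeff (V : P → ℕ → K) {k : ℕ} (t : Fin k → P)
    (ht : (evalMatrix V t).det ≠ 0) :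
    ∃ q : ℕ → K, q k = 1 ∧ (∀ l, k < l → q l = 0) ∧ ∀ (p : P) (n : ℕ), k < n →
      ∑ l : Fin n, V p l * q l =
        (evalMatrix V (Fin.snoc t p : Fin (k + 1) → P)).det / (evalMatrix V t).det := by
  refine ⟨fun l => if h : l < k + 1 then (-1) ^ (k + l) *
    (Matrix.of fun i j : Fin k => V (t i) (Fin.succAbove ⟨l, h⟩ j)).det /
      (evalMatrix V t).det else 0, ?_, ?_, ?_⟩
  · have h : (⟨k, k.lt_succ_self⟩ : Fin (k + 1)) = Fin.last k := rfl
    simp only [Nat.lt_succ_self, dif_pos, h, Fin.succAbove_last, Fin.val_castSucc]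
    rw [← two_mul, pow_mul, neg_one_sq, one_pow, one_mul]
    exact div_self ht
  · intro l hl
    exact dif_neg (by omega)
  · intro p n hn
    rw [Fin.sum_univ_eq_sum_range (fun l => V p l * if h : l < k + 1 then (-1) ^ (k + l) *
      (Matrix.of fun i j : Fin k => V (t i) (Fin.succAbove ⟨l, h⟩ j)).det /
        (evalMatrix V t).det else 0),
      ← Finset.sum_subset (Finset.range_subset_range.2 (Nat.succ_le_of_lt hn)),
      Finset.sum_range, Matrix.det_succ_row _ (Fin.last k), Finset.sum_div]
    · refine Finset.sum_congr rfl fun l _ => ?_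
      rw [dif_pos l.2]
      have h : (evalMatrix V (Fin.snoc t p : Fin (k + 1) → P)).submatrix (Fin.last k).succAbove
          l.succAbove = Matrix.of fun i j : Fin k => V (t i) (l.succAbove j) := by
        ext i j
        simp [evalMatrix]
      rw [h]
      simp only [evalMatrix, Matrix.of_apply, Fin.snoc_last, Fin.val_last, Fin.eta]
      ring
    · intro l _ hl
      rw [dif_neg (by simpa using hl), mul_zero]

lemma det_evalMatrix_append (V : P → ℕ → K) (t : ℕ → P)
    (ht : ∀ k, (evalMatrix V fun i : Fin k => t i).det ≠ 0) (N m : ℕ) (z : Fin m → P) :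
    (evalMatrix V (Fin.append (fun i : Fin N => t i) z)).det =
      (evalMatrix V fun i : Fin N => t i).det *
        (Matrix.of fun i j : Fin m =>
          (evalMatrix V (Fin.snoc (fun i : Fin (N + j) => t i) (z i) :
            Fin (N + j + 1) → P)).det /
              (evalMatrix V fun i : Fin (N + j) => t i).det).det := by
  choose q hq₁ hq₀ hq using fun k => exists_reduced_coeff V (fun i : Fin k => t i) (ht k)
  have htri : ∀ n, (Matrix.of fun l k : Fin n => q k l).det = 1 := by
    intro n
    rw [Matrix.det_of_isUpperTriangular]
    · simp [hq₁]
    · intro i j hij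
      exact hq₀ _ _ hij
  have hmul : ∀ (n : ℕ) (p : Fin n → P), evalMatrix V p * (Matrix.of fun l k : Fin n => q k l) =
      Matrix.of fun i k : Fin n =>
        (evalMatrix V (Fin.snoc (fun i : Fin k => t i) (p i) : Fin (k + 1) → P)).det /
          (evalMatrix V fun i : Fin k => t i).det := by
    intro n p
    ext i k
    rw [Matrix.mul_apply]
    exact hq k (p i) n k.2
  have hdet : ∀ (n : ℕ) (p : Fin n → P), (evalMatrix V p).det = (Matrix.of fun i k : Fin n =>
        (evalMatrix V (Fin.snoc (fun i : Fin k => t i) (p i) : Fin (k + 1) → P)).det /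
          (evalMatrix V fun i : Fin k => t i).det).det := by
    intro n p
    rw [← hmul, Matrix.det_mul, htri, mul_one]
  rw [hdet (N + m), hdet N,
    ← Matrix.det_fromBlocks_zero₁₂ _ (Matrix.of fun (i : Fin m) (k : Fin N) =>
        (evalMatrix V (Fin.snoc (fun i : Fin k => t i) (z i) : Fin (k + 1) → P)).det /
          (evalMatrix V fun i : Fin k => t i).det),
    ← Matrix.det_submatrix_equiv_self finSumFinEquiv]
  congr 1
  ext (i | i) (k | k)
  · simp
  · simp only [Matrix.submatrix_apply, Matrix.of_apply, finSumFinEquiv_apply_left,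
      finSumFinEquiv_apply_right, Fin.append_left, Matrix.fromBlocks_apply₁₂, Matrix.zero_apply]
    rw [Matrix.det_zero_of_row_eq (i := Fin.castSucc ⟨i, by simp; omega⟩) (j := Fin.last _),
      zero_div]
    · exact (Fin.castSucc_lt_last _).ne
    · have hi : (i : ℕ) < N + k := by omega
      funext j
      simp [evalMatrix, Fin.snoc, hi]
  · simp
  · simp

end ReducedDeterminant

section GeneralPoints

lemma det_vandermonde_snoc {n : ℕ} (s : Fin n → R) (a : R) :
    (Matrix.vandermonde (Fin.snoc s a : Fin (n + 1) → R)).det =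
      (∏ l, (a - s l)) * (Matrix.vandermonde s).det := by
  have h : (Fin.snoc s a : Fin (n + 1) → R) ∘ Fin.castSucc = s := by
    funext i
    simp
  rw [det_vandermonde_succAbove _ (Fin.last n), Fin.succAbove_last, h, Fin.val_last,
    ← two_mul, pow_mul, neg_one_sq, one_pow, one_mul]
  simp

lemma det_vandermonde_append {N m : ℕ} (s : Fin N → R) (u : Fin m → R) :
    (Matrix.vandermonde (Fin.append s u)).det = (Matrix.vandermonde s).det *
      (∏ i, ∏ l, (u i - s l)) * (Matrix.vandermonde u).det := by
  induction m with
  | zero =>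
    rw [Subsingleton.elim u Fin.elim0]
    simp
  | succ m ih =>
    obtain ⟨v, a, rfl⟩ : ∃ v a, (Fin.snoc v a : Fin (m + 1) → R) = u :=
      ⟨_, _, Fin.snoc_init_self u⟩
    have h : ∏ l, (a - Fin.append s v l) = (∏ l, (a - s l)) * ∏ l, (a - v l) := by
      simp [Fin.prod_univ_add]
    rw [Fin.append_snoc]
    refine (det_vandermonde_snoc (Fin.append s v) a).trans ?_
    rw [h, ih, det_vandermonde_snoc v, Fin.prod_univ_castSucc]
    simp only [Fin.snoc_castSucc, Fin.snoc_last]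
    ring

variable {K : Type*} [Field K] {x y : K}

lemma prod_pow_mul_det_vandermonde_inv {m : ℕ} (z : Fin m → K) (h₀ : ∀ i, z i ≠ 0) :
    (∏ i, z i ^ (m - 1)) * (Matrix.vandermonde fun i => (z i)⁻¹).det =
      ∏ i, ∏ j ∈ Finset.Ioi i, (z i - z j) := by
  have h := Matrix.det_projVandermonde (fun _ => 1) z
  simp only [one_mul] at h
  rw [← h, ← Matrix.det_mul_column]
  congr 1
  ext i j
  have hj : m - 1 = Fin.rev j + j := by
    rw [Fin.val_rev]
    omega
  rw [Matrix.of_apply, Matrix.vandermonde_apply, Matrix.projVandermonde_apply, one_pow, one_mul,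
    hj, pow_add, inv_pow, mul_assoc, mul_inv_cancel₀ (pow_ne_zero _ (h₀ i)), mul_one]

lemma partitionFunction_append (t : ℕ → K) {N m : ℕ} (z : Fin m → K)
    (ht : Function.Injective t) (ht₀ : ∀ i, t i ≠ 0) (hz : Function.Injective z)
    (hz₀ : ∀ i, z i ≠ 0) (htz : ∀ i j, t i ≠ z j)
    (hF : ∀ k, partitionFunction x y (fun i : Fin k => t i) ≠ 0) :
    (∏ i, ∏ j ∈ Finset.Ioi i, (z i - z j)) *
        (∏ j : Fin m, partitionFunction x y (fun i : Fin (N + j) => t i) *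
          ∏ l : Fin j, t (N + l)) *
        partitionFunction x y (Fin.append (fun i : Fin N => t i) z) =
      partitionFunction x y (fun i : Fin N => t i) * (Matrix.of fun i j : Fin m =>
        z i ^ (j.rev : ℕ) * (∏ l : Fin j, (t (N + l) - z i)) *
          partitionFunction x y (Fin.snoc (fun i : Fin (N + j) => t i) (z i) :
            Fin (N + j + 1) → K)).det := by
  set V : K → ℕ → K := fun p j => complHom p⁻¹ (x + 1 - y - x * p) j with hV
  have hG : ∀ {n : ℕ} (p : Fin n → K), Function.Injective p → (∀ i, p i ≠ 0) →
      (evalMatrix V p).det = partitionFunction x y p * (Matrix.vandermonde fun i => (p i)⁻¹).det :=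
    fun p hp h₀ => (partitionFunction_mul_det_vandermonde p hp h₀).symm
  have htk : ∀ k, Function.Injective fun i : Fin k => t i :=
    fun k => ht.comp Fin.val_injective
  have hvan : ∀ k, (Matrix.vandermonde fun i : Fin k => (t i)⁻¹).det ≠ 0 := fun k =>
    Matrix.det_vandermonde_ne_zero_iff.2 (inv_injective.comp (htk k))
  have hGt : ∀ k, (evalMatrix V fun i : Fin k => t i).det ≠ 0 := fun k => by
    rw [hG _ (htk k) fun i => ht₀ _]
    exact mul_ne_zero (hF k) (hvan k)
  have hinv : ∀ (k : ℕ) (i : Fin m) (l : Fin k), (z i)⁻¹ - (t l)⁻¹ ≠ 0 := fun k i l =>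
    sub_ne_zero.2 fun h => htz l i (inv_injective h.symm)
  have key := det_evalMatrix_append V t hGt N m z
  have happ : (fun i => (Fin.append (fun i : Fin N => t i) z i)⁻¹) =
      Fin.append (fun i : Fin N => (t i)⁻¹) fun i => (z i)⁻¹ := by
    funext i
    refine Fin.addCases (fun i => ?_) (fun i => ?_) i <;> simp
  rw [hG, hG _ (htk N) fun i => ht₀ _, happ, det_vandermonde_append] at key
  rotate_left
  · exact Fin.append_injective_iff.2 ⟨htk N, hz, fun i j => htz i j⟩
  · intro i
    refine Fin.addCases (fun i => ?_) (fun i => ?_) i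
    · simpa using ht₀ i
    · simpa using hz₀ i
  have hentry : (Matrix.of fun i j : Fin m =>
        z i ^ (j.rev : ℕ) * (∏ l : Fin j, (t (N + l) - z i)) *
          partitionFunction x y (Fin.snoc (fun i : Fin (N + j) => t i) (z i) :
            Fin (N + j + 1) → K)) =
      Matrix.of fun i j => (z i ^ (m - 1) * (∏ l : Fin N, ((z i)⁻¹ - (t l)⁻¹))⁻¹) *
        (Matrix.of fun i j : Fin m => (partitionFunction x y (fun i : Fin (N + j) => t i) *
          ∏ l : Fin j, t (N + l)) * (Matrix.of fun i j : Fin m =>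
            (evalMatrix V (Fin.snoc (fun i : Fin (N + j) => t i) (z i) :
              Fin (N + j + 1) → K)).det /
                (evalMatrix V fun i : Fin (N + j) => t i).det) i j) i j := by
    ext i j
    have hs : (fun l => ((Fin.snoc (fun i : Fin (N + j) => t i) (z i) :
        Fin (N + j + 1) → K) l)⁻¹) =
        (Fin.snoc (fun i : Fin (N + j) => (t i)⁻¹) (z i)⁻¹ : Fin (N + j + 1) → K) := by
      funext l
      refine Fin.lastCases ?_ (fun l => ?_) l <;> simp
    simp only [Matrix.of_apply]
    rw [hG _ (htk _) fun i => ht₀ _, hG, hs, det_vandermonde_snoc, Fin.prod_univ_add]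
    rotate_left
    · exact Fin.snoc_injective_iff.2 ⟨htk _, fun ⟨l, hl⟩ => htz _ _ hl⟩
    · intro l
      refine Fin.lastCases ?_ (fun l => ?_) l
      · simpa using hz₀ i
      · simpa using ht₀ l
    have h1 : z i ^ (m - 1) * ((∏ l : Fin j, t (N + l)) *
        ∏ l : Fin j, ((z i)⁻¹ - (t (N + l))⁻¹)) =
        z i ^ (j.rev : ℕ) * ∏ l : Fin j, (t (N + l) - z i) := by
      have hj : m - 1 = j.rev + j := by
        rw [Fin.val_rev]
        omega
      have hc : z i ^ (j : ℕ) = ∏ _l : Fin j, z i := by simp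
      rw [hj, pow_add, mul_assoc, hc, ← Finset.prod_mul_distrib, ← Finset.prod_mul_distrib]
      congr 1
      refine Finset.prod_congr rfl fun l _ => ?_
      have := hz₀ i
      have := ht₀ (N + l)
      field_simp
    rw [← h1]
    have h2 : ∏ l : Fin N, ((z i)⁻¹ - (t l)⁻¹) ≠ 0 :=
      Finset.prod_ne_zero_iff.2 fun l _ => hinv N i l
    have h3 := hvan (N + j)
    have h4 := hF (N + j)
    simp only [Fin.val_castAdd, Fin.val_natAdd]
    generalize ∏ l : Fin N, ((z i)⁻¹ - (t l)⁻¹) = a at h2 ⊢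
    generalize (Matrix.vandermonde fun i : Fin (N + j) => (t i)⁻¹).det = b at h3 ⊢
    field_simp
  rw [hentry, Matrix.det_mul_column, Matrix.det_mul_row,
    ← prod_pow_mul_det_vandermonde_inv z hz₀]
  simp only [Finset.prod_mul_distrib, Finset.prod_inv_distrib]
  have h2 : ∏ i : Fin m, ∏ l : Fin N, ((z i)⁻¹ - (t l)⁻¹) ≠ 0 :=
    Finset.prod_ne_zero_iff.2 fun i _ => Finset.prod_ne_zero_iff.2 fun l _ => hinv N i l
  have h3 := hvan N
  generalize (Matrix.vandermonde fun i : Fin N => (t i)⁻¹).det = b at h3 key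
  generalize (Matrix.vandermonde fun i => (z i)⁻¹).det = d at key ⊢
  generalize ∏ i : Fin m, ∏ l : Fin N, ((z i)⁻¹ - (t l)⁻¹) = a at h2 key ⊢
  field_simp
  refine mul_left_cancel₀ h3 ?_
  linear_combination (∏ i, z i ^ (m - 1)) *
    ((∏ j : Fin m, partitionFunction x y fun i : Fin (N + j) => t i) *
      ∏ j : Fin m, ∏ l : Fin j, t (N + l)) * key

end GeneralPoints

section CommRing

lemma complHom_zero (s : R) (k : ℕ) : complHom s 0 k = s ^ k := by
  cases k <;> simp [complHom]

lemma partitionFunction_zero_one {K : Type*} [Field K] {n : ℕ} (z : Fin n → K)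
    (hz : Function.Injective z) (h₀ : ∀ i, z i ≠ 0) : partitionFunction 0 1 z = 1 := by
  have h := partitionFunction_mul_det_vandermonde (x := 0) (y := 1) z hz h₀
  simp only [zero_add, sub_self, zero_mul, complHom_zero] at h
  exact mul_right_cancel₀ (Matrix.det_vandermonde_ne_zero_iff.2 (inv_injective.comp hz))
    (h.trans (one_mul _).symm)

lemma partitionFunction_comp_perm_of_isDomain [IsDomain R] (x y : R) {n : ℕ} (z : Fin n → R)
    (σ : Equiv.Perm (Fin n)) : partitionFunction x y (z ∘ σ) = partitionFunction x y z := by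
  apply IsFractionRing.injective R (FractionRing R)
  rw [map_partitionFunction, map_partitionFunction]
  exact partitionFunction_comp_perm_of_field _ _ (fun i => algebraMap R (FractionRing R) (z i)) σ

/-- The partition function is symmetric in its spectral parameters. -/
lemma partitionFunction_comp_perm (x y : R) {n : ℕ} (z : Fin n → R) (σ : Equiv.Perm (Fin n)) :
    partitionFunction x y (z ∘ σ) = partitionFunction x y z := by
  have h := congrArg (MvPolynomial.eval₂Hom (Int.castRingHom R)
    (Sum.elim (fun b => bif b then x else y) z))
      (partitionFunction_comp_perm_of_isDomain (R := MvPolynomial (Bool ⊕ Fin n) ℤ)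
        (MvPolynomial.X (Sum.inl true)) (MvPolynomial.X (Sum.inl false))
        (fun i => MvPolynomial.X (Sum.inr i)) σ)
  rw [map_partitionFunction, map_partitionFunction] at h
  simp only [MvPolynomial.coe_eval₂Hom, MvPolynomial.eval₂_X, Sum.elim_inl, Sum.elim_inr,
    cond_true, cond_false, Function.comp_apply] at h
  exact h

/-- Product side of the evaluation of the partition function at `N` values of `t` and the
values of `z`. -/
def productSide {m : ℕ} (N : ℕ) (x y : R) (t : ℕ → R) (z : Fin (m + 1) → R) : R :=
  (∏ i, ∏ j ∈ Finset.Ioi i, (z i - z j)) *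
    ((∏ j : Fin m, partitionFunction x y (fun i : Fin (N + (j + 1)) => t i)) *
      ∏ j : Fin (m + 1), ∏ l : Fin j, t (N + l)) *
    partitionFunction x y (Fin.append (fun i : Fin N => t i) z)

/-- Determinant side of the evaluation of the partition function at `N` values of `t` and the
values of `z`. -/
def determinantSide {m : ℕ} (N : ℕ) (x y : R) (t : ℕ → R) (z : Fin (m + 1) → R) : R :=
  (Matrix.of fun i j : Fin (m + 1) =>
    z i ^ (j.rev : ℕ) * (∏ l : Fin j, (t (N + l) - z i)) *
      partitionFunction x y (Fin.snoc (fun i : Fin (N + j) => t i) (z i) :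
        Fin (N + j + 1) → R)).det

lemma map_productSide {S : Type*} [CommRing S] (φ : R →+* S) {m : ℕ} (N : ℕ) (x y : R)
    (t : ℕ → R) (z : Fin (m + 1) → R) :
    φ (productSide N x y t z) = productSide N (φ x) (φ y) (fun i => φ (t i)) fun i => φ (z i) := by
  have h : (fun i => φ (Fin.append (fun i : Fin N => t i) z i)) =
      Fin.append (fun i : Fin N => φ (t i)) fun i => φ (z i) := by
    funext i
    refine Fin.addCases (fun i => ?_) (fun i => ?_) i <;> simp
  simp only [productSide, map_mul, map_prod, map_sub, map_partitionFunction, h]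

lemma map_determinantSide {S : Type*} [CommRing S] (φ : R →+* S) {m : ℕ} (N : ℕ) (x y : R)
    (t : ℕ → R) (z : Fin (m + 1) → R) :
    φ (determinantSide N x y t z) =
      determinantSide N (φ x) (φ y) (fun i => φ (t i)) fun i => φ (z i) := by
  have h : ∀ (n : ℕ) (a : R), (fun l => φ ((Fin.snoc (fun i : Fin n => t i) a :
      Fin (n + 1) → R) l)) = (Fin.snoc (fun i : Fin n => φ (t i)) (φ a) : Fin (n + 1) → S) := by
    intro n a
    funext l
    refine Fin.lastCases ?_ (fun l => ?_) l <;> simp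
  rw [determinantSide, RingHom.map_det, determinantSide]
  congr 1
  ext i j
  simp only [RingHom.mapMatrix_apply, Matrix.map_apply, Matrix.of_apply, map_mul, map_pow,
    map_prod, map_sub, map_partitionFunction, h]

lemma productSide_eq_determinantSide_of_field {K : Type*} [Field K] {m : ℕ} (N : ℕ) (x y : K)
    (t : ℕ → K) (z : Fin (m + 1) → K) (ht : Function.Injective t) (ht₀ : ∀ i, t i ≠ 0)
    (hz : Function.Injective z) (hz₀ : ∀ i, z i ≠ 0) (htz : ∀ i j, t i ≠ z j)
    (hF : ∀ k, partitionFunction x y (fun i : Fin k => t i) ≠ 0) :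
    productSide N x y t z = determinantSide N x y t z := by
  have key := partitionFunction_append (N := N) t z ht ht₀ hz hz₀ htz hF
  rw [Finset.prod_mul_distrib, Fin.prod_univ_succ
    fun j : Fin (m + 1) => partitionFunction x y fun i : Fin (N + j) => t i] at key
  refine mul_left_cancel₀ (hF N) (Eq.trans ?_ key)
  have h : partitionFunction x y (fun i : Fin (N + ((0 : Fin (m + 1)) : ℕ)) => t i) =
    partitionFunction x y fun i : Fin N => t i := rfl
  simp only [productSide, Fin.val_succ, h]
  ring

lemma productSide_eq_determinantSide {m : ℕ} (N : ℕ) (x y : R) (t : ℕ → R)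
    (z : Fin (m + 1) → R) : productSide N x y t z = determinantSide N x y t z := by
  let A := MvPolynomial (Bool ⊕ Fin (m + 1) ⊕ ℕ) ℤ
  have hι : Function.Injective (algebraMap A (FractionRing A)) := IsFractionRing.injective _ _
  have hX : Function.Injective fun i : Bool ⊕ Fin (m + 1) ⊕ ℕ =>
      algebraMap A (FractionRing A) (MvPolynomial.X i) := hι.comp MvPolynomial.X_injective
  have hX₀ : ∀ i, algebraMap A (FractionRing A) (MvPolynomial.X i) ≠ 0 := fun i h =>
    MvPolynomial.X_ne_zero i (hι (h.trans (map_zero _).symm))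
  have hF : ∀ k, partitionFunction (MvPolynomial.X (Sum.inl true) : A)
      (MvPolynomial.X (Sum.inl false))
      (fun i : Fin k => MvPolynomial.X (Sum.inr (Sum.inr (i : ℕ)))) ≠ 0 := by
    intro k hk
    have h := congrArg (MvPolynomial.eval₂Hom (Int.castRingHom ℚ)
      (Sum.elim (fun b => bif b then (0 : ℚ) else 1)
        (Sum.elim (fun _ => 0) fun i : ℕ => (i : ℚ) + 1))) hk
    rw [map_partitionFunction, map_zero] at h
    simp only [MvPolynomial.coe_eval₂Hom, MvPolynomial.eval₂_X, Sum.elim_inl, Sum.elim_inr,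
      cond_true, cond_false] at h
    rw [partitionFunction_zero_one] at h
    · exact one_ne_zero h
    · intro i j hij
      simpa [Fin.ext_iff] using hij
    · intro i
      positivity
  have hA : productSide N (MvPolynomial.X (Sum.inl true) : A) (MvPolynomial.X (Sum.inl false))
      (fun i => MvPolynomial.X (Sum.inr (Sum.inr i)))
      (fun i : Fin (m + 1) => MvPolynomial.X (Sum.inr (Sum.inl i))) =
    determinantSide N (MvPolynomial.X (Sum.inl true)) (MvPolynomial.X (Sum.inl false))
      (fun i => MvPolynomial.X (Sum.inr (Sum.inr i)))
      (fun i : Fin (m + 1) => MvPolynomial.X (Sum.inr (Sum.inl i))) := by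
    apply hι
    rw [map_productSide, map_determinantSide]
    refine productSide_eq_determinantSide_of_field N _ _ _ _
      (hX.comp (Sum.inr_injective.comp Sum.inr_injective)) (fun i => hX₀ _)
      (hX.comp (Sum.inr_injective.comp Sum.inl_injective)) (fun i => hX₀ _)
      (fun i j h => by simpa using hX h) fun k hk => hF k (hι ?_)
    rw [map_partitionFunction, hk, map_zero]
  have h := congrArg (MvPolynomial.eval₂Hom (Int.castRingHom R)
    (Sum.elim (fun b => bif b then x else y) (Sum.elim z t))) hA
  rw [map_productSide, map_determinantSide] at h
  simpa only [MvPolynomial.coe_eval₂Hom, MvPolynomial.eval₂_X, Sum.elim_inl, Sum.elim_inr,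
    cond_true, cond_false] using h

end CommRing

section AlternatingSignMatrices

variable {n : ℕ}

lemma rowWeight_zero_eq (x y z : R) (c r : Fin n → ℤ) :
    rowWeight x y z 0 c r =
      if (∀ j, ((∑ j' ∈ univ.filter (fun j' => j' ≤ j), r j') = 0 ∨
          (∑ j' ∈ univ.filter (fun j' => j' ≤ j), r j') = 1) ∧ (c j = 0 ∨ c j = 1) ∧
          (c j + r j = 0 ∨ c j + r j = 1)) ∧ ∑ j, r j = 1 then
        x ^ (univ.filter fun j => c j = 1 ∧
            (∑ j' ∈ univ.filter (fun j' => j' ≤ j), r j') = 1).card *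
          z ^ (univ.filter fun j => c j = ∑ j' ∈ univ.filter (fun j' => j' ≤ j), r j').card *
          (x * z ^ 2 + (y - x - 1) * z + 1) ^ (univ.filter fun j => r j = -1).card
      else 0 := by
  simp only [rowWeight, vertexWeight, zero_add]
  rw [Fintype.prod_ite_zero]
  by_cases h1 : ∀ j, ((∑ j' ∈ univ.filter (fun j' => j' ≤ j), r j') = 0 ∨
      (∑ j' ∈ univ.filter (fun j' => j' ≤ j), r j') = 1) ∧ (c j = 0 ∨ c j = 1) ∧
      (c j + r j = 0 ∨ c j + r j = 1)
  · by_cases h2 : ∑ j, r j = 1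
    · rw [if_pos h1, if_pos h2, if_pos ⟨h1, h2⟩, mul_one]
      simp only [Finset.prod_mul_distrib, Finset.prod_ite, Finset.prod_const,
        one_pow, mul_one]
    · rw [if_neg h2, if_neg (not_and_of_not_right _ h2), mul_zero]
  · rw [if_neg h1, if_neg (not_and_of_not_left _ h1), zero_mul]

lemma sum_filter_lt_eq_zero_or_one {A : Fin n → Fin n → ℤ} (hA : IsASM A) (i j : Fin n) :
    (∑ i' ∈ univ.filter (fun i' : Fin n => i' < i), A i' j) = 0 ∨
      (∑ i' ∈ univ.filter (fun i' : Fin n => i' < i), A i' j) = 1 := by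
  rcases Nat.eq_zero_or_pos (i : ℕ) with h | h
  · left
    apply Finset.sum_eq_zero
    intro i' hi'
    simp only [Finset.mem_filter, Finset.mem_univ, true_and, Fin.lt_def] at hi'
    omega
  · have := hA.2.2.1 ⟨i - 1, by omega⟩ j
    convert this using 4 <;>
    · simp only [Fin.lt_def, Fin.le_def]
      omega

lemma sum_filter_le_eq (A : Fin n → Fin n → ℤ) (i j : Fin n) :
    (∑ i' ∈ univ.filter (fun i' : Fin n => i' ≤ i), A i' j) =
      (∑ i' ∈ univ.filter (fun i' : Fin n => i' < i), A i' j) + A i j := by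
  have h : univ.filter (fun i' : Fin n => i' ≤ i) =
      insert i (univ.filter fun i' : Fin n => i' < i) := by
    ext a
    simp [le_iff_eq_or_lt]
  rw [h, Finset.sum_insert (by simp), add_comm]

lemma isASM_asmMat_iff (e : Fin n → Fin n → Fin 3) :
    IsASM (asmMat e) ↔ (∀ i, (∀ j,
      ((∑ j' ∈ univ.filter (fun j' => j' ≤ j), asmMat e i j') = 0 ∨
        (∑ j' ∈ univ.filter (fun j' => j' ≤ j), asmMat e i j') = 1) ∧
      ((∑ i' ∈ univ.filter (fun i' => i' < i), asmMat e i' j) = 0 ∨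
        (∑ i' ∈ univ.filter (fun i' => i' < i), asmMat e i' j) = 1) ∧
      ((∑ i' ∈ univ.filter (fun i' => i' < i), asmMat e i' j) + asmMat e i j = 0 ∨
        (∑ i' ∈ univ.filter (fun i' => i' < i), asmMat e i' j) + asmMat e i j = 1)) ∧
      ∑ j, asmMat e i j = 1) ∧ (fun j => ∑ i, asmMat e i j) = fun _ => 1 := by
  constructor
  · intro h
    refine ⟨fun i => ⟨fun j => ⟨h.2.1 i j, sum_filter_lt_eq_zero_or_one h i j, ?_⟩, h.2.2.2.1 i⟩,
      funext h.2.2.2.2⟩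
    rw [← sum_filter_le_eq]
    exact h.2.2.1 i j
  · rintro ⟨h, hc⟩
    refine ⟨fun i j => ?_, fun i j => ((h i).1 j).1, fun i j => ?_, fun i => (h i).2,
      fun j => congrFun hc j⟩
    · unfold asmMat
      have := (e i j).isLt
      omega
    · rw [sum_filter_le_eq]
      exact ((h i).1 j).2.2

lemma nuASM_eq_sum {A : Fin n → Fin n → ℤ} (hA : IsASM A) :
    nuASM A = ∑ i, (univ.filter fun j =>
      (∑ i' ∈ univ.filter (fun i' => i' < i), A i' j) = 1 ∧
        (∑ j' ∈ univ.filter (fun j' => j' ≤ j), A i j') = 1).card := by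
  have h : (∑ i : Fin n, ∑ i' : Fin n, ∑ j : Fin n, ∑ j' : Fin n,
      if i < i' ∧ j' ≤ j then A i j * A i' j' else 0) =
      ∑ i', ∑ j, (∑ i ∈ univ.filter (fun i => i < i'), A i j) *
        ∑ j' ∈ univ.filter (fun j' => j' ≤ j), A i' j' := by
    rw [Finset.sum_comm]
    refine Finset.sum_congr rfl fun i' _ => ?_
    rw [Finset.sum_comm]
    refine Finset.sum_congr rfl fun j _ => ?_
    rw [Finset.sum_filter, Finset.sum_filter, Finset.sum_mul_sum]
    refine Finset.sum_congr rfl fun i _ => Finset.sum_congr rfl fun j' _ => ?_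
    split_ifs <;> simp_all
  rw [nuASM, h]
  have h2 : ∀ i' j, (∑ i ∈ univ.filter (fun i => i < i'), A i j) *
        ∑ j' ∈ univ.filter (fun j' => j' ≤ j), A i' j' =
      if (∑ i ∈ univ.filter (fun i => i < i'), A i j) = 1 ∧
        (∑ j' ∈ univ.filter (fun j' => j' ≤ j), A i' j') = 1 then 1 else 0 := by
    intro i' j
    rcases sum_filter_lt_eq_zero_or_one hA i' j with h1 | h1 <;>
      rcases hA.2.1 i' j with h2 | h2 <;> simp [h1, h2]
  simp only [h2, Finset.sum_boole]
  rw [← Nat.cast_sum, Int.toNat_natCast]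

open Classical in
lemma partitionFunction_eq_sum (x y : R) (z : Fin n → R) :
    partitionFunction x y z = ∑ e : Fin n → Fin n → Fin 3,
      if IsASM (asmMat e) then x ^ nuASM (asmMat e) * ∏ i, z i ^ nuRow (asmMat e) i *
        (x * z i ^ 2 + (y - x - 1) * z i + 1) ^ muRow (asmMat e) i else 0 := by
  refine Finset.sum_congr rfl fun e _ => ?_
  have hprod := Finset.prod_congr (s₁ := univ) rfl fun i _ => rowWeight_zero_eq x y (z i)
    (fun j => ∑ i' ∈ univ.filter (fun i' => i' < i), asmMat e i' j) (asmMat e i)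
  rw [Fintype.prod_ite_zero] at hprod
  refine (congrArg (· * _) hprod).trans ?_
  change _ * (if (fun j => ∑ i, asmMat e i j) = fun _ => 1 then (1 : R) else 0) = _
  by_cases h : IsASM (asmMat e)
  · obtain ⟨h1, h2⟩ := (isASM_asmMat_iff e).1 h
    rw [if_pos h1, if_pos h2, if_pos h, nuASM_eq_sum h, ← Finset.prod_pow_eq_pow_sum,
      ← Finset.prod_mul_distrib, mul_one]
    refine Finset.prod_congr rfl fun i _ => ?_
    rw [mul_assoc]
    rfl
  · rw [if_neg h]
    by_cases h2 : (fun j => ∑ i, asmMat e i j) = fun _ => 1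
    · rw [if_neg fun h1 => h ((isASM_asmMat_iff e).2 ⟨h1, h2⟩), zero_mul]
    · rw [if_neg h2, mul_zero]

lemma muASM_eq_sum (A : Fin n → Fin n → ℤ) : muASM A = ∑ i, muRow A i := by
  rw [muASM, Finset.card_filter, Fintype.sum_prod_type]
  simp [muRow]

/-- The multi-row generating function is a partition function in which the chosen rows carry
the given parameters and all other rows carry the parameter `1`. -/
lemma Zmulti_eq_partitionFunction {m : ℕ} (k : Fin m → Fin n) (hk : Function.Injective k)
    (x y : R) (z : Fin m → R) :
    Zmulti n m k x y z (fun i => x * z i ^ 2 + (y - x - 1) * z i + 1) =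
      partitionFunction x y (Function.extend k z 1) := by
  classical
  rw [partitionFunction_eq_sum]
  refine Finset.sum_congr rfl fun e _ => ?_
  refine if_congr Iff.rfl ?_ rfl
  set A := asmMat e
  have hsplit : ∀ {M : Type _} [CommMonoid M] (f : Fin n → M),
      ∏ i, f i = (∏ i ∈ univ.filter (fun i => i ∉ Set.range k), f i) * ∏ i, f (k i) := by
    intro M _ f
    rw [← Finset.prod_filter_mul_prod_filter_not univ (fun i => i ∉ Set.range k)]
    congr 1
    rw [← Finset.prod_image (s := univ) (g := k) hk.injOn]
    refine Finset.prod_congr ?_ fun _ _ => rfl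
    ext
    simp
  have hmu : muASM A - ∑ i, muRow A (k i) =
      ∑ i ∈ univ.filter (fun i => i ∉ Set.range k), muRow A i := by
    rw [muASM_eq_sum, ← Finset.sum_filter_add_sum_filter_not univ (fun i => i ∉ Set.range k),
      ← Finset.sum_image (s := univ) (g := k) (f := muRow A) hk.injOn]
    rw [Nat.sub_eq_of_eq_add]
    congr 1
    refine Finset.sum_congr ?_ fun _ _ => rfl
    ext
    simp
  rw [hsplit, hmu, mul_assoc, ← Finset.prod_pow_eq_pow_sum]
  congr 2
  · refine Finset.prod_congr rfl fun i hi => ?_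
    rw [Function.extend_apply' _ _ _ (by simpa using hi)]
    simp only [Pi.one_apply, one_pow, mul_one, one_mul]
    congr 1
    ring
  · simp only [hk.extend_apply]

end AlternatingSignMatrices

section Specialization

variable {n : ℕ}

lemma exists_perm_comp_eq_append {N m : ℕ} (hn : N + m = n) {k : Fin m → Fin n}
    (hk : Function.Injective k) (z : Fin m → R) :
    ∃ σ : Fin (N + m) ≃ Fin n,
      Function.extend k z 1 ∘ σ = Fin.append (fun _ : Fin N => (1 : R)) z := by
  classical
  have hcard : Fintype.card (Fin N) = Fintype.card ↥(Set.range k)ᶜ := by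
    rw [Fintype.card_compl_set, Set.card_range_of_injective hk]
    simp only [Fintype.card_fin]
    omega
  let τ : Fin N ≃ ↥(Set.range k)ᶜ := Fintype.equivOfCardEq hcard
  refine ⟨finSumFinEquiv.symm.trans ((Equiv.sumComm _ _).trans
    (((Equiv.ofInjective k hk).sumCongr τ).trans (Equiv.Set.sumCompl (Set.range k)))), ?_⟩
  funext i
  refine Fin.addCases (fun i => ?_) (fun i => ?_) i
  · simp only [Function.comp_apply, Equiv.trans_apply, finSumFinEquiv_symm_apply_castAdd,
      Equiv.sumComm_apply, Sum.swap_inl, Equiv.sumCongr_apply, Sum.map_inr,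
      Equiv.Set.sumCompl_apply_inr, Fin.append_left]
    rw [Function.extend_apply' _ _ _ (τ i).2, Pi.one_apply]
  · simp only [Function.comp_apply, Equiv.trans_apply, finSumFinEquiv_symm_apply_natAdd,
      Equiv.sumComm_apply, Sum.swap_inr, Equiv.sumCongr_apply, Sum.map_inl,
      Equiv.Set.sumCompl_apply_inl, Fin.append_right, Equiv.ofInjective_apply, hk.extend_apply]

lemma partitionFunction_extend (x y : R) {N m : ℕ} {k : Fin m → Fin (N + m)}
    (hk : Function.Injective k) (z : Fin m → R) :
    partitionFunction x y (Function.extend k z 1) =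
      partitionFunction x y (Fin.append (fun _ : Fin N => 1) z) := by
  obtain ⟨σ, hσ⟩ := exists_perm_comp_eq_append rfl hk z
  rw [← hσ, partitionFunction_comp_perm]

lemma rhoT_eq_nuRow {A : Fin (n + 1) → Fin (n + 1) → ℤ} (hA : IsASM A) :
    rhoT A = nuRow A 0 := by
  have h01 : ∀ j, A 0 j = 0 ∨ A 0 j = 1 := by
    intro j
    have := hA.2.2.1 0 j
    rwa [sum_filter_le_eq, Finset.filter_eq_empty_iff.2 fun i _ => Fin.not_lt_zero i,
      Finset.sum_empty, zero_add] at this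
  have hnonneg : ∀ j, 0 ≤ A 0 j := fun j => by rcases h01 j with h | h <;> simp [h]
  rw [rhoT, nuRow]
  congr 1
  refine Finset.filter_congr fun j _ => ?_
  have hzero : (⟨0, j.pos⟩ : Fin (n + 1)) = 0 := rfl
  rw [hzero, Finset.filter_eq_empty_iff.2 fun i _ => Fin.not_lt_zero i, Finset.sum_empty]
  have hsplit := Finset.sum_filter_add_sum_filter_not univ (fun j' => j' ≤ j) (A 0)
  rw [hA.2.2.2.1 0] at hsplit
  constructor
  · rintro ⟨-, j', hj, hj'⟩
    have h1 : A 0 j' ≤ ∑ j' ∈ univ.filter (fun j' => ¬j' ≤ j), A 0 j' :=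
      Finset.single_le_sum (fun i _ => hnonneg i) (by simpa using hj)
    rcases hA.2.1 0 j with h | h
    · exact h.symm
    · omega
  · intro h
    have h1 : A 0 j ≤ ∑ j' ∈ univ.filter (fun j' => j' ≤ j), A 0 j' :=
      Finset.single_le_sum (fun i _ => hnonneg i) (by simp)
    refine ⟨le_antisymm (h ▸ h1) (hnonneg j), ?_⟩
    by_contra! hne
    rw [← h, zero_add, Finset.sum_eq_zero] at hsplit
    · exact zero_ne_one hsplit
    · intro j' hj'
      exact (h01 j').resolve_right (hne j' (by simpa using hj'))

lemma muRow_zero {A : Fin (n + 1) → Fin (n + 1) → ℤ} (hA : IsASM A) : muRow A 0 = 0 := by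
  rw [muRow, Finset.card_eq_zero, Finset.filter_eq_empty_iff]
  intro j _ h
  have := hA.2.2.1 0 j
  rw [sum_filter_le_eq, h] at this
  simp at this

lemma Zsing_succ (x y a : R) :
    Zsing (n + 1) x y a =
      partitionFunction x y (Fin.snoc (fun _ : Fin n => 1) a : Fin (n + 1) → R) := by
  have h := Zmulti_eq_partitionFunction (fun _ : Fin 1 => (0 : Fin (n + 1)))
    (Function.injective_of_subsingleton _) x y fun _ => a
  rw [partitionFunction_extend x y (Function.injective_of_subsingleton _),
    Fin.append_right_eq_snoc] at h
  refine Eq.trans (Finset.sum_congr rfl fun e _ => ?_) h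
  by_cases hA : IsASM (asmMat e)
  · simp [hA, rhoT_eq_nuRow, muRow_zero]
  · simp [hA]

lemma Zun_succ (x y : R) :
    Zun (n + 1) x y = partitionFunction x y fun _ : Fin (n + 1) => 1 := by
  refine (Zsing_succ x y 1).trans ?_
  congr 1
  funext i
  refine Fin.lastCases ?_ (fun i => ?_) i <;> simp

lemma prod_Ioi_sub_rev (m : ℕ) (z : Fin (m + 1) → R) :
    (∏ i : Fin (m + 1), ∏ j ∈ Ioi i, (z i.rev - z j.rev)) =
      (∏ j : Fin (m + 1), (-1) ^ (j.rev : ℕ)) * ∏ i, ∏ j ∈ Ioi i, (z i - z j) := by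
  have h1 : ∀ f : Fin (m + 1) → Fin (m + 1) → R,
      (∏ i, ∏ j ∈ Ioi i, f i j) = ∏ i, ∏ j, if i < j then f i j else 1 := by
    intro f
    refine Finset.prod_congr rfl fun i _ => ?_
    rw [← Finset.prod_filter]
    refine Finset.prod_congr ?_ fun _ _ => rfl
    ext
    simp
  have h2 : (∏ i : Fin (m + 1), ∏ j ∈ Ioi i, (z i.rev - z j.rev)) =
      ∏ i : Fin (m + 1), ∏ j ∈ Ioi i, (z j - z i) := by
    rw [h1, h1, Finset.prod_comm]
    refine Fintype.prod_equiv Fin.revPerm _ _ fun i =>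
      Fintype.prod_equiv Fin.revPerm _ _ fun j => ?_
    simp
  rw [h2, ← Finset.prod_mul_distrib]
  refine Finset.prod_congr rfl fun i _ => ?_
  have h3 : (i.rev : ℕ) = (Ioi i).card := by
    rw [Fin.card_Ioi, Fin.val_rev]
    omega
  rw [h3, ← Finset.prod_const, ← Finset.prod_mul_distrib]
  exact Finset.prod_congr rfl fun j _ => by ring

lemma prod_neg_one_pow_mul_self (m : ℕ) :
    (∏ j : Fin m, (-1 : R) ^ (j.rev : ℕ)) * (∏ j : Fin m, (-1 : R) ^ (j.rev : ℕ)) = 1 := by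
  rw [← Finset.prod_mul_distrib]
  exact Finset.prod_eq_one fun j _ => by rw [← mul_pow]; simp

lemma determinantSide_one (N : ℕ) {m : ℕ} (x y : R) (z : Fin (m + 1) → R) :
    determinantSide N x y (fun _ => 1) (fun i => z i.rev) =
      (∏ j : Fin (m + 1), (-1) ^ (j.rev : ℕ)) * (Matrix.of fun i j : Fin (m + 1) =>
        z i ^ (j : ℕ) * (z i - 1) ^ (j.rev : ℕ) *
          partitionFunction x y
            (Fin.snoc (fun _ : Fin (N + j.rev) => 1) (z i) : Fin (N + j.rev + 1) → R)).det := by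
  rw [determinantSide, ← Matrix.det_submatrix_equiv_self Fin.revPerm, ← Matrix.det_mul_row]
  congr 1
  ext i j
  simp only [Matrix.submatrix_apply, Matrix.of_apply, Fin.revPerm_apply, Fin.rev_rev,
    Finset.prod_const, Finset.card_univ, Fintype.card_fin]
  rw [← neg_sub (z i) 1, neg_pow]
  ring

lemma productSide_one (N : ℕ) {m : ℕ} (x y : R) (z : Fin (m + 1) → R) :
    productSide N x y (fun _ => 1) (fun i => z i.rev) =
      (∏ j : Fin (m + 1), (-1) ^ (j.rev : ℕ)) * ((∏ i, ∏ j ∈ Ioi i, (z i - z j)) *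
        (∏ j : Fin m, partitionFunction x y fun _ : Fin (N + (j + 1)) => 1) *
          partitionFunction x y (Fin.append (fun _ : Fin N => 1) z)) := by
  have h : partitionFunction x y (Fin.append (fun _ : Fin N => 1) fun i => z i.rev) =
      partitionFunction x y (Fin.append (fun _ : Fin N => 1) z) := by
    have hinj : Function.Injective (Fin.natAdd N : Fin (m + 1) → Fin (N + (m + 1))) :=
      Fin.natAdd_injective _ _
    rw [← partitionFunction_extend x y hinj z, ← partitionFunction_extend x y
      (hinj.comp Fin.rev_injective) fun i => z i.rev]
    congr 1
    funext i
    by_cases hi : ∃ a, Fin.natAdd N a = i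
    · obtain ⟨a, rfl⟩ := hi
      rw [hinj.extend_apply]
      conv_lhs => rw [← Fin.rev_rev a]
      exact ((hinj.comp Fin.rev_injective).extend_apply _ _ a.rev).trans (by rw [Fin.rev_rev])
    · rw [Function.extend_apply' _ _ _ hi, Function.extend_apply']
      rintro ⟨a, ha⟩
      exact hi ⟨_, ha⟩
  rw [productSide, h, prod_Ioi_sub_rev]
  simp only [Finset.prod_const_one, mul_one]
  ring

end Specialization

end SixVertex

/-- Determinantal evaluation of the multi-row ASM generating function at
`w_i = x z_i² + (y−x−1) z_i + 1`, stated for all values of the variables in any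
commutative ring, equivalently as an identity of polynomials in
`ℤ[x,y,z_1,…,z_m]`.  The rows `1 ≤ k_1 < … < k_m ≤ n` are encoded by a strictly
monotone function `k : Fin m → Fin n`; in particular the left-hand side is
independent of the choice of rows. -/
theorem stmt18 {R : Type*} [CommRing R] (x y : R) (n m : ℕ) (hm : 1 ≤ m) (hmn : m ≤ n)
    (k : Fin m → Fin n) (hk : StrictMono k) (z : Fin m → R) :
    (∏ i : Fin m, ∏ j ∈ Finset.Ioi i, (z i - z j)) *
        (∏ i ∈ Finset.Icc 1 (m - 1), Zun (n - i) x y) *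
        Zmulti n m k x y z (fun i => x * z i ^ 2 + (y - x - 1) * z i + 1) =
      Matrix.det (Matrix.of fun i j : Fin m =>
        z i ^ (j : ℕ) * (z i - 1) ^ (m - 1 - (j : ℕ)) *
          Zsing (n - (j : ℕ)) x y (z i)) := by
  obtain ⟨m, rfl⟩ := Nat.exists_eq_add_of_le' hm
  obtain ⟨N, rfl⟩ := Nat.exists_eq_add_of_le' hmn
  have key := SixVertex.productSide_eq_determinantSide N x y (fun _ => 1) fun i => z i.rev
  rw [SixVertex.productSide_one, SixVertex.determinantSide_one] at key
  replace key := congrArg ((∏ j : Fin (m + 1), (-1 : R) ^ (j.rev : ℕ)) * ·) key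
  simp only [← mul_assoc, SixVertex.prod_neg_one_pow_mul_self, one_mul] at key
  rw [SixVertex.Zmulti_eq_partitionFunction k hk.injective,
    SixVertex.partitionFunction_extend x y hk.injective]
  have hprod : ∏ i ∈ Finset.Icc 1 (m + 1 - 1), Zun (N + (m + 1) - i) x y =
      ∏ j : Fin m, SixVertex.partitionFunction x y fun _ : Fin (N + (j + 1)) => 1 := by
    refine Eq.trans ?_ ((Finset.prod_range fun j => Zun (N + j + 1) x y).trans
      (Finset.prod_congr rfl fun j _ => SixVertex.Zun_succ (n := N + j) x y))
    refine Finset.prod_nbij' (m - ·) (m - ·) ?_ ?_ ?_ ?_ ?_ <;>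
      simp only [Finset.mem_Icc, Finset.mem_range]
    · omega
    · omega
    · omega
    · omega
    · intro i hi
      congr 1
      omega
  rw [hprod, key]
  congr 1
  ext i j
  have h1 : m + 1 - 1 - (j : ℕ) = j.rev := by
    rw [Fin.val_rev]
    omega
  have h2 : N + (m + 1) - (j : ℕ) = N + j.rev + 1 := by
    rw [Fin.val_rev]
    omega
  simp only [Matrix.of_apply, h1, h2, SixVertex.Zsing_succ]
end
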